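/- arXiv:2303.10250 — 8 statements merged into one kernel-verified Lean document; each statement's English description precedes it below -/
import Mathlib

section
/- Suppose the regressors satisfy the PE condition with constants 0 < ε₁ ≤ ε₂ and window ΔT ≥ 1, that λ > 1, that ‖φ_i‖² ≤ M for all i ≥ 1 for some M > 0, and that the hyperparameters satisfy κ·ε₁·(λ − 1)/(λ·(λ^{ΔT} − 1)) > (η − κ)·M. Define F_max > 0 by F_max^{−1} = κ·ε₁·(λ − 1)/(λ·(λ^{ΔT} − 1)) − (η − κ)·M. If the initial matrix satisfies F₀ ≤ (F_max/λ^{ΔT−1})·I, then F_k ≤ F_max·I (in the Loewner order) for all k ≥ 0. -/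
/-!
The argument runs on the inverse matrices `R k = (F k)⁻¹`. By the Sherman–Morrison formula the
recursion for `F` becomes the linear one
`R (k+1) = l⁻¹ (R k + κ / (1 + (η - κ) φᵀ F φ) • φ φᵀ)` (with `φ = φ (k+1)`, `F = F k`), see
`posDef_and_inv_step`; in particular every `F k` is positive definite. The goal `F k ≤ Fmax` is
equivalent to `Fmax⁻¹ ≤ R k`, which is proved by strong induction.

* For `k < ΔT`, dropping the rank-one terms gives `R k ≥ l⁻ᵏ R 0`, and the bound on `F 0` suffices.
* For `k = p + ΔT`, the induction hypothesis gives `φᵀ F φ ≤ Fmax M` along the window, so that every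
  rank-one term has weight at least `c = κ / (1 + (η - κ) M Fmax)`. Hence
  `l ^ ΔT R k ≥ R p + c ∑ φ φᵀ ≥ Fmax⁻¹ + c ε₁` by persistent excitation (`window_bound`), and the
  definition of `Fmax` yields `Fmax⁻¹ + c ε₁ ≥ l ^ ΔT Fmax⁻¹`.

Loewner inequalities are handled as inequalities between quadratic forms.
-/

open Matrix

lemma dotProduct_vecMulVec_mulVec {n : ℕ} (v x : Fin n → ℝ) :
    x ⬝ᵥ (vecMulVec v v *ᵥ x) = (v ⬝ᵥ x) ^ 2 := by
  rw [vecMulVec_mulVec, op_smul_eq_smul, dotProduct_smul, smul_eq_mul, dotProduct_comm x v, sq]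

/-- The Sherman–Morrison step: the update preserves positive definiteness, and the inverse is
updated linearly by a rank-one term. -/
lemma posDef_and_inv_step {n : ℕ} {A : Matrix (Fin n) (Fin n) ℝ} (hA : A.PosDef)
    (v : Fin n → ℝ) {l κ η : ℝ} (hl : 0 < l) (hκ : 0 < κ) (hηκ : κ ≤ η) :
    (l • (A - (κ / (1 + η * (v ⬝ᵥ A *ᵥ v))) • (A * vecMulVec v v * A))).PosDef ∧
    (l • (A - (κ / (1 + η * (v ⬝ᵥ A *ᵥ v))) • (A * vecMulVec v v * A)))⁻¹ =
      l⁻¹ • (A⁻¹ + (κ / (1 + (η - κ) * (v ⬝ᵥ A *ᵥ v))) • vecMulVec v v) := by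
  have hs : 0 ≤ v ⬝ᵥ A *ᵥ v := by simpa using hA.posSemidef.dotProduct_mulVec_nonneg v
  have hP : vecMulVec v v * A * vecMulVec v v = (v ⬝ᵥ A *ᵥ v) • vecMulVec v v := by
    rw [Matrix.mul_assoc, mul_vecMulVec, vecMulVec_mul_vecMulVec, vecMulVec_smul]
  set s := v ⬝ᵥ A *ᵥ v
  have h1 : 0 < 1 + η * s := by nlinarith
  have h2 : 0 < 1 + (η - κ) * s := by nlinarith [mul_nonneg (sub_nonneg.2 hηκ) hs]
  set b := κ / (1 + η * s) with hb
  set a := κ / (1 + (η - κ) * s) with ha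
  have ha0 : 0 ≤ a := by positivity
  have hab : a - b - b * a * s = 0 := by
    rw [ha, hb]; field_simp; ring
  have hV : (vecMulVec v v).PosSemidef := by
    simpa using posSemidef_vecMulVec_self_star v
  have hG : (l⁻¹ • (A⁻¹ + a • vecMulVec v v)).PosDef :=
    (hA.inv.add_posSemidef (hV.smul ha0)).smul (inv_pos.2 hl)
  have hu : IsUnit A.det := (Matrix.isUnit_iff_isUnit_det A).1 hA.isUnit
  have hmul : (l • (A - b • (A * vecMulVec v v * A))) * (l⁻¹ • (A⁻¹ + a • vecMulVec v v)) = 1 := by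
    have e1 : A * vecMulVec v v * A * A⁻¹ = A * vecMulVec v v := by
      rw [Matrix.mul_assoc (A * vecMulVec v v), Matrix.mul_nonsing_inv _ hu, Matrix.mul_one]
    have e2 : A * vecMulVec v v * A * vecMulVec v v = s • (A * vecMulVec v v) := by
      rw [Matrix.mul_assoc A, Matrix.mul_assoc A, hP, Matrix.mul_smul]
    rw [Matrix.smul_mul, Matrix.mul_smul, smul_smul, mul_inv_cancel₀ hl.ne', one_smul,
      Matrix.sub_mul, Matrix.mul_add, Matrix.mul_add, Matrix.smul_mul, Matrix.smul_mul,
      Matrix.mul_smul, Matrix.mul_smul, e1, e2, Matrix.mul_nonsing_inv _ hu]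
    have : (1 : Matrix (Fin n) (Fin n) ℝ) + a • (A * vecMulVec v v) -
        (b • (A * vecMulVec v v) + b • a • s • (A * vecMulVec v v)) =
        1 + (a - b - b * a * s) • (A * vecMulVec v v) := by
      module
    rw [this, hab, zero_smul, add_zero]
  have hinv := Matrix.inv_eq_right_inv hmul
  refine ⟨?_, hinv⟩
  rw [← Matrix.inv_eq_left_inv hmul]
  exact hG.inv

/-- Half of inverse antitonicity: `A⁻¹ ≥ m` implies `A ≤ m⁻¹`. -/
lemma form_le_of_le_inv {n : ℕ} {A : Matrix (Fin n) (Fin n) ℝ} (hA : A.PosDef) {m : ℝ}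
    (hm : 0 < m) (h : ∀ x, m * (x ⬝ᵥ x) ≤ x ⬝ᵥ A⁻¹ *ᵥ x) (y : Fin n → ℝ) :
    y ⬝ᵥ A *ᵥ y ≤ m⁻¹ * (y ⬝ᵥ y) := by
  have hu : IsUnit A.det := (Matrix.isUnit_iff_isUnit_det A).1 hA.isUnit
  have hx := h (A *ᵥ y)
  rw [Matrix.mulVec_mulVec, Matrix.nonsing_inv_mul _ hu, Matrix.one_mulVec,
    dotProduct_comm (A *ᵥ y) y] at hx
  -- Expanding `‖y - m A y‖² ≥ 0` replaces the Cauchy–Schwarz inequality.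
  have hsq : 0 ≤ (y - m • (A *ᵥ y)) ⬝ᵥ (y - m • (A *ᵥ y)) := by
    simpa using dotProduct_self_star_nonneg (y - m • (A *ᵥ y))
  simp only [sub_dotProduct, dotProduct_sub, smul_dotProduct, dotProduct_smul, smul_eq_mul,
    dotProduct_comm (A *ᵥ y) y] at hsq
  rw [inv_mul_eq_div, le_div_iff₀ hm]
  nlinarith [mul_le_mul_of_nonneg_left hx hm.le]

/-- Half of inverse antitonicity: `A ≤ C` implies `A⁻¹ ≥ C⁻¹`. -/
lemma le_inv_form_of_form_le {n : ℕ} {A : Matrix (Fin n) (Fin n) ℝ} (hA : A.PosDef) {C : ℝ}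
    (hC : 0 < C) (h : ∀ x, x ⬝ᵥ A *ᵥ x ≤ C * (x ⬝ᵥ x)) (x : Fin n → ℝ) :
    C⁻¹ * (x ⬝ᵥ x) ≤ x ⬝ᵥ A⁻¹ *ᵥ x := by
  have hu : IsUnit A.det := (Matrix.isUnit_iff_isUnit_det A).1 hA.isUnit
  obtain ⟨y, rfl⟩ : ∃ y, x = A *ᵥ y :=
    ⟨A⁻¹ *ᵥ x, by rw [Matrix.mulVec_mulVec, Matrix.mul_nonsing_inv _ hu, Matrix.one_mulVec]⟩
  rw [Matrix.mulVec_mulVec, Matrix.nonsing_inv_mul _ hu, Matrix.one_mulVec]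
  have hsym : y ⬝ᵥ A *ᵥ (A *ᵥ y) = (A *ᵥ y) ⬝ᵥ (A *ᵥ y) := by
    have ht : Aᵀ = A := by simpa using hA.isHermitian.eq
    rw [dotProduct_mulVec, ← mulVec_transpose, ht]
  -- Nonnegativity of the form of `A` at `y - C⁻¹ A y` replaces the Cauchy–Schwarz inequality.
  have hq : 0 ≤ (y - C⁻¹ • (A *ᵥ y)) ⬝ᵥ A *ᵥ (y - C⁻¹ • (A *ᵥ y)) := by
    simpa using hA.posSemidef.dotProduct_mulVec_nonneg (y - C⁻¹ • (A *ᵥ y))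
  simp only [Matrix.mulVec_sub, Matrix.mulVec_smul, sub_dotProduct, dotProduct_sub,
    smul_dotProduct, dotProduct_smul, smul_eq_mul, hsym] at hq
  have hAy := h (A *ᵥ y)
  have hCi : 0 < C⁻¹ := inv_pos.2 hC
  have hmul : C⁻¹ * (C⁻¹ * ((A *ᵥ y) ⬝ᵥ A *ᵥ (A *ᵥ y))) ≤ C⁻¹ * ((A *ᵥ y) ⬝ᵥ (A *ᵥ y)) := by
    refine mul_le_mul_of_nonneg_left ?_ hCi.le
    rwa [inv_mul_le_iff₀ hC]
  rw [dotProduct_comm (A *ᵥ y) y]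
  linarith

/-- Unrolling `q (k+1) = l⁻¹ (q k + a k * g (k+1))` over a window, discarding the factors `l ^ j ≥ 1`
in front of the increments and bounding the weights `a` below by `c`. -/
lemma window_bound {q a g : ℕ → ℝ} {l c : ℝ} (hl : 1 < l) (hc : 0 ≤ c) (hg : ∀ k, 0 ≤ g k)
    (hq : ∀ k, q (k + 1) = l⁻¹ * (q k + a k * g (k + 1))) (p T : ℕ)
    (ha : ∀ j, j < T → c ≤ a (p + j)) :
    q p + c * ∑ i ∈ Finset.range T, g (p + 1 + i) ≤ l ^ T * q (p + T) := by
  induction T with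
  | zero => simp
  | succ T ih =>
    have ih := ih fun j hj => ha j (by omega)
    have e : l ^ (T + 1) * q (p + (T + 1)) =
        l ^ T * q (p + T) + l ^ T * (a (p + T) * g (p + 1 + T)) := by
      rw [← add_assoc, hq, show p + T + 1 = p + 1 + T by ring, pow_succ]
      field_simp
    have h1 : c * g (p + 1 + T) ≤ a (p + T) * g (p + 1 + T) :=
      mul_le_mul_of_nonneg_right (ha T (by omega)) (hg _)
    have h2 : a (p + T) * g (p + 1 + T) ≤ l ^ T * (a (p + T) * g (p + 1 + T)) :=
      le_mul_of_one_le_left ((mul_nonneg hc (hg _)).trans h1) (one_le_pow₀ hl.le)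
    rw [Finset.sum_range_succ, e]
    linarith

/-- The scalar inequality that makes `m` (the inverse of `Fmax`) reproduce itself over one window;
`D` stands for `(η - κ) M`. -/
lemma window_constant {l κ ε₁ D m : ℝ} {T : ℕ} (hl : 1 < l) (hT : 1 ≤ T) (hκ : 0 < κ)
    (hε₁ : 0 < ε₁) (hm : 0 < m) (hD : 0 ≤ D)
    (hmD : m = κ * ε₁ * (l - 1) / (l * (l ^ T - 1)) - D) :
    l ^ T * m ≤ m + κ / (1 + D * m⁻¹) * ε₁ := by
  have hlT : 1 < l ^ T := one_lt_pow₀ hl (by omega)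
  have hA : (m + D) * (l * (l ^ T - 1)) = κ * ε₁ * (l - 1) := by
    rw [hmD, sub_add_cancel, div_mul_cancel₀]
    have : 0 < l * (l ^ T - 1) := mul_pos (by linarith) (by linarith)
    exact this.ne'
  have hmD0 : 0 < m + D := by linarith
  have hc : κ / (1 + D * m⁻¹) * ε₁ = κ * ε₁ * m / (m + D) := by
    field_simp
  have hkey : (l ^ T - 1) * (m + D) ≤ κ * ε₁ := by
    have h0 : 0 < (m + D) * (l ^ T - 1) := mul_pos hmD0 (by linarith)
    have : (l - 1) * ((m + D) * (l ^ T - 1)) ≤ (l - 1) * (κ * ε₁) := by nlinarith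
    have := le_of_mul_le_mul_left this (by linarith)
    linarith
  rw [hc]
  have : (l ^ T - 1) * m ≤ κ * ε₁ * m / (m + D) := by
    rw [le_div_iff₀ hmD0]
    nlinarith [mul_le_mul_of_nonneg_right hkey hm.le]
  linarith

/-- Upper bound on the gain matrices under persistent excitation (Lemma 1):
if κε₁(λ−1)/(λ(λ^ΔT −1)) > (η−κ)M, F_max⁻¹ = κε₁(λ−1)/(λ(λ^ΔT −1)) − (η−κ)M and
F₀ ≤ (F_max/λ^{ΔT−1})·I, then F_k ≤ F_max·I for all k ≥ 0. -/
theorem stmt_1 {n : ℕ} (hn : 1 ≤ n) (φ : ℕ → Fin n → ℝ)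
    (l κ η : ℝ) (hl : 1 < l) (hκ : 0 < κ) (hη : 0 < η) (hηκ : κ ≤ η)
    (F : ℕ → Matrix (Fin n) (Fin n) ℝ)
    (hF0 : (F 0).PosDef)
    (hFrec : ∀ k : ℕ, 1 ≤ k →
      F k = l • (F (k - 1) -
        (κ / (1 + η * (φ k ⬝ᵥ (F (k - 1)).mulVec (φ k)))) •
          (F (k - 1) * vecMulVec (φ k) (φ k) * F (k - 1))))
    (ε₁ ε₂ : ℝ) (ΔT : ℕ) (hε₁ : 0 < ε₁) (hε : ε₁ ≤ ε₂) (hΔT : 1 ≤ ΔT)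
    (hPE : ∀ k : ℕ, ΔT < k →
      ((∑ i ∈ Finset.Ico (k - ΔT) k, vecMulVec (φ i) (φ i)) -
          ε₁ • (1 : Matrix (Fin n) (Fin n) ℝ)).PosSemidef ∧
        (ε₂ • (1 : Matrix (Fin n) (Fin n) ℝ) -
          ∑ i ∈ Finset.Ico (k - ΔT) k, vecMulVec (φ i) (φ i)).PosSemidef)
    (M : ℝ) (hM : 0 < M) (hφ : ∀ i : ℕ, 1 ≤ i → φ i ⬝ᵥ φ i ≤ M)
    (hhyp : (η - κ) * M < κ * ε₁ * (l - 1) / (l * (l ^ ΔT - 1)))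
    (Fmax : ℝ) (hFmaxpos : 0 < Fmax)
    (hFmax : Fmax⁻¹ = κ * ε₁ * (l - 1) / (l * (l ^ ΔT - 1)) - (η - κ) * M)
    (hF0le : ((Fmax / l ^ (ΔT - 1)) • (1 : Matrix (Fin n) (Fin n) ℝ) - F 0).PosSemidef) :
    ∀ k : ℕ, (Fmax • (1 : Matrix (Fin n) (Fin n) ℝ) - F k).PosSemidef := by
  have hl0 : 0 < l := by linarith
  have hrec : ∀ k, F (k + 1) = l • (F k -
      (κ / (1 + η * (φ (k + 1) ⬝ᵥ F k *ᵥ φ (k + 1)))) •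
        (F k * vecMulVec (φ (k + 1)) (φ (k + 1)) * F k)) := fun k => by
    simpa using hFrec (k + 1) (by omega)
  have hpd : ∀ k, (F k).PosDef := by
    intro k
    induction k with
    | zero => exact hF0
    | succ k ih => rw [hrec k]; exact (posDef_and_inv_step ih _ hl0 hκ hηκ).1
  have hs : ∀ k, 0 ≤ φ (k + 1) ⬝ᵥ F k *ᵥ φ (k + 1) := fun k => by
    simpa using (hpd k).posSemidef.dotProduct_mulVec_nonneg (φ (k + 1))
  set a : ℕ → ℝ := fun k => κ / (1 + (η - κ) * (φ (k + 1) ⬝ᵥ F k *ᵥ φ (k + 1))) with ha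
  have hηκ' : 0 ≤ η - κ := sub_nonneg.2 hηκ
  have ha0 : ∀ k, 0 ≤ a k := fun k => by
    have := mul_nonneg hηκ' (hs k)
    simp only [ha]; positivity
  have hq : ∀ (x : Fin n → ℝ) (k : ℕ), x ⬝ᵥ (F (k + 1))⁻¹ *ᵥ x =
      l⁻¹ * (x ⬝ᵥ (F k)⁻¹ *ᵥ x + a k * (φ (k + 1) ⬝ᵥ x) ^ 2) := fun x k => by
    rw [hrec k, (posDef_and_inv_step (hpd k) _ hl0 hκ hηκ).2, smul_mulVec, add_mulVec,
      smul_mulVec, dotProduct_smul, dotProduct_add, dotProduct_smul,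
      dotProduct_vecMulVec_mulVec, smul_eq_mul, smul_eq_mul]
  have hm : 0 < Fmax⁻¹ := inv_pos.2 hFmaxpos
  have hnn : ∀ x : Fin n → ℝ, 0 ≤ x ⬝ᵥ x := fun x => by
    simpa using dotProduct_self_star_nonneg x
  have key : ∀ k, ∀ x : Fin n → ℝ, Fmax⁻¹ * (x ⬝ᵥ x) ≤ x ⬝ᵥ (F k)⁻¹ *ᵥ x := by
    intro k
    induction k using Nat.strong_induction_on with
    | _ k ih =>
    intro x
    rcases lt_or_ge k ΔT with hk | hk
    · have h0 := le_inv_form_of_form_le hF0 (C := Fmax / l ^ (ΔT - 1)) (by positivity) (fun y => by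
        have := hF0le.dotProduct_mulVec_nonneg y
        simp only [star_trivial, sub_mulVec, smul_mulVec, one_mulVec, dotProduct_sub,
          dotProduct_smul, smul_eq_mul] at this
        linarith) x
      have hw := window_bound (q := fun k => x ⬝ᵥ (F k)⁻¹ *ᵥ x)
        (g := fun k => (φ k ⬝ᵥ x) ^ 2) hl le_rfl (fun _ => sq_nonneg _) (hq x) 0 k
        (fun j _ => ha0 _)
      simp only [zero_mul, add_zero, zero_add] at hw
      have hpow : l ^ k ≤ l ^ (ΔT - 1) := pow_le_pow_right₀ hl.le (by omega)
      rw [inv_div, div_eq_mul_inv] at h0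
      have h1 : l ^ k * (Fmax⁻¹ * (x ⬝ᵥ x)) ≤ l ^ (ΔT - 1) * (Fmax⁻¹ * (x ⬝ᵥ x)) :=
        mul_le_mul_of_nonneg_right hpow (mul_nonneg hm.le (hnn x))
      refine le_of_mul_le_mul_left ?_ (pow_pos hl0 k)
      linarith
    · obtain ⟨p, rfl⟩ := Nat.exists_eq_add_of_le' hk
      have hc0 : 0 < 1 + (η - κ) * M * (Fmax⁻¹)⁻¹ := by
        rw [inv_inv]
        have := mul_nonneg (mul_nonneg hηκ' hM.le) hFmaxpos.le
        linarith
      have hw := window_bound (q := fun k => x ⬝ᵥ (F k)⁻¹ *ᵥ x)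
        (g := fun k => (φ k ⬝ᵥ x) ^ 2) (c := κ / (1 + (η - κ) * M * (Fmax⁻¹)⁻¹)) hl
        (by positivity) (fun _ => sq_nonneg _) (hq x) p ΔT (fun j hj => by
          have h1 := form_le_of_le_inv (hpd (p + j)) hm (ih (p + j) (by omega)) (φ (p + j + 1))
          have h2 : (Fmax⁻¹)⁻¹ * (φ (p + j + 1) ⬝ᵥ φ (p + j + 1)) ≤ (Fmax⁻¹)⁻¹ * M :=
            mul_le_mul_of_nonneg_left (hφ _ (by omega)) (inv_pos.2 hm).le
          have h3 := mul_le_mul_of_nonneg_left (h1.trans h2) hηκ'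
          have h4 := mul_nonneg hηκ' (hs (p + j))
          simp only [ha]
          apply div_le_div_of_nonneg_left hκ.le (by linarith)
          linarith)
      have hpe : ε₁ * (x ⬝ᵥ x) ≤ ∑ i ∈ Finset.range ΔT, (φ (p + 1 + i) ⬝ᵥ x) ^ 2 := by
        have h := (hPE (p + 1 + ΔT) (by omega)).1.dotProduct_mulVec_nonneg x
        rw [Nat.add_sub_cancel, Finset.sum_Ico_eq_sum_range, Nat.add_sub_cancel_left] at h
        simp only [star_trivial, sub_mulVec, smul_mulVec, one_mulVec, dotProduct_sub,
          dotProduct_smul, smul_eq_mul, sum_mulVec, dotProduct_sum,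
          dotProduct_vecMulVec_mulVec] at h
        linarith
      have hcon := window_constant (D := (η - κ) * M) hl hΔT hκ hε₁ hm
        (mul_nonneg hηκ' hM.le) hFmax
      have hp := ih p (by omega) x
      have h5 := mul_le_mul_of_nonneg_right hcon (hnn x)
      have h6 := mul_le_mul_of_nonneg_left hpe (div_pos hκ hc0).le
      refine le_of_mul_le_mul_left ?_ (pow_pos hl0 ΔT)
      linarith
  intro k
  refine PosSemidef.of_dotProduct_mulVec_nonneg
    ((isHermitian_one.smul (IsSelfAdjoint.all Fmax)).sub (hpd k).isHermitian) fun x => ?_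
  have h := form_le_of_le_inv (hpd k) hm (key k) x
  rw [inv_inv] at h
  simp only [star_trivial, sub_mulVec, smul_mulVec, one_mulVec, dotProduct_sub,
    dotProduct_smul, smul_eq_mul]
  linarith
end

section
/- Suppose λ > 1, ‖φ_i‖² ≤ M for all i ≥ 1, and let Δ_max = 1 + (η − κ)·F_max·M for some F_max > 0. If F_{i−1} ≤ F_max·I for all i with k − ΔT ≤ i ≤ k − 1 (where k > ΔT), then the windowed sum satisfies Σ_{i=k−ΔT}^{k−1} φ_i φ_iᵀ / Δ_max ≤ (λ/κ)·((λ^{ΔT} − 1)/(λ − 1))·F_{k−1}^{−1} in the Loewner order. -/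
open Matrix

/-!
By the Sherman–Morrison formula, the recursion for `F` becomes, with `q = φᵢᵀ Fᵢ₋₁ φᵢ`,
`Fᵢ⁻¹ = λ⁻¹ (Fᵢ₋₁⁻¹ + κ / (1 + (η - κ) q) • φᵢ φᵢᵀ)` (`inv_update`). On the window
`0 ≤ q ≤ F_max M`, so `κ / (1 + (η - κ) q) ≥ κ / Δ_max`. Hence both `Fᵢ₋₁⁻¹ ≤ λ Fᵢ⁻¹` and
`φᵢ φᵢᵀ / Δ_max ≤ (λ / κ) Fᵢ⁻¹`. Propagating the second bound to the end of the window with the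
first costs a factor `λ` per step, and the resulting geometric sum is the constant of the theorem.
-/

/-- Sherman–Morrison for the update with gain `κ` and normalisation `1 + η q`: the inverse
is a rank-one correction whose denominator only involves `η - κ`. -/
lemma inv_update {n : ℕ} (A : Matrix (Fin n) (Fin n) ℝ) (hA : IsUnit A.det) (v : Fin n → ℝ)
    (l κ η : ℝ) (hl : l ≠ 0)
    (h1 : 1 + η * (v ⬝ᵥ A *ᵥ v) ≠ 0) (h2 : 1 + (η - κ) * (v ⬝ᵥ A *ᵥ v) ≠ 0) :
    (l • (A - (κ / (1 + η * (v ⬝ᵥ A *ᵥ v))) • (A * vecMulVec v v * A)))⁻¹ =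
      l⁻¹ • (A⁻¹ + (κ / (1 + (η - κ) * (v ⬝ᵥ A *ᵥ v))) • vecMulVec v v) := by
  apply Matrix.inv_eq_right_inv
  have hV : vecMulVec v v * A * vecMulVec v v = (v ⬝ᵥ A *ᵥ v) • vecMulVec v v := by
    rw [Matrix.mul_assoc, mul_vecMulVec, vecMulVec_mul_vecMulVec, vecMulVec_smul]
  generalize v ⬝ᵥ A *ᵥ v = q at *
  have hcoef : κ / (1 + (η - κ) * q) - κ / (1 + η * q)
      - κ / (1 + η * q) * (κ / (1 + (η - κ) * q)) * q = 0 := by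
    field_simp
    ring
  generalize κ / (1 + η * q) = c at *
  generalize κ / (1 + (η - κ) * q) = d at *
  generalize vecMulVec v v = V at *
  have e1 : A * V * A * A⁻¹ = A * V := by
    rw [Matrix.mul_assoc, Matrix.mul_nonsing_inv _ hA, Matrix.mul_one]
  have e2 : A * V * A * V = q • (A * V) := by
    rw [Matrix.mul_assoc, Matrix.mul_assoc, ← Matrix.mul_assoc V, hV, Matrix.mul_smul]
  rw [smul_mul_smul_comm, mul_inv_cancel₀ hl, one_smul, Matrix.sub_mul, Matrix.mul_add,
    Matrix.mul_add, Matrix.mul_nonsing_inv _ hA, Matrix.mul_smul, Matrix.smul_mul,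
    Matrix.smul_mul, Matrix.mul_smul, e1, e2]
  have : (1 + d • (A * V) - (c • (A * V) + c • d • q • (A * V)))
      = 1 + (d - c - c * d * q) • (A * V) := by
    module
  rw [this, hcoef, zero_smul, add_zero]

lemma quad_vecMulVec {n : ℕ} (v x : Fin n → ℝ) :
    x ⬝ᵥ vecMulVec v v *ᵥ x = (v ⬝ᵥ x) ^ 2 := by
  rw [vecMulVec_mulVec]
  simp [dotProduct_comm x v, sq]

/-- One step of the recursion, as an inequality of quadratic forms: `q` is replaced in the
denominator of the rank-one term by its upper bound `Fmax * M`. -/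
lemma quad_step {n : ℕ} (A : Matrix (Fin n) (Fin n) ℝ) (hA : A.PosDef) (v x : Fin n → ℝ)
    (l κ η M Fmax : ℝ) (hl : 1 < l) (hκ : 0 < κ) (hηκ : κ ≤ η) (hv : v ⬝ᵥ v ≤ M)
    (hF : 0 < Fmax) (hle : (Fmax • (1 : Matrix (Fin n) (Fin n) ℝ) - A).PosSemidef) :
    x ⬝ᵥ A⁻¹ *ᵥ x + κ * ((1 + (η - κ) * Fmax * M)⁻¹ * (v ⬝ᵥ x) ^ 2) ≤
      l * (x ⬝ᵥ (l • (A - (κ / (1 + η * (v ⬝ᵥ A *ᵥ v))) •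
        (A * vecMulVec v v * A)))⁻¹ *ᵥ x) := by
  have hq0 : 0 ≤ v ⬝ᵥ A *ᵥ v := by
    simpa using hA.posSemidef.dotProduct_mulVec_nonneg v
  have hqM : v ⬝ᵥ A *ᵥ v ≤ Fmax * M := by
    have h := hle.dotProduct_mulVec_nonneg v
    simp only [star_trivial, sub_mulVec, smul_mulVec, one_mulVec, dotProduct_sub,
      dotProduct_smul, smul_eq_mul] at h
    nlinarith
  have hη : 0 ≤ η - κ := by linarith
  have hden : 0 < 1 + (η - κ) * (v ⬝ᵥ A *ᵥ v) := by positivity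
  have hden' : 0 < 1 + η * (v ⬝ᵥ A *ᵥ v) := by
    have : 0 < η := by linarith
    positivity
  rw [inv_update A ((Matrix.isUnit_iff_isUnit_det A).1 hA.isUnit) v l κ η (by positivity)
    hden'.ne' hden.ne']
  simp only [smul_mulVec, add_mulVec, dotProduct_add, dotProduct_smul, smul_eq_mul,
    quad_vecMulVec]
  rw [mul_inv_cancel_left₀ (by positivity), div_eq_mul_inv, mul_assoc κ]
  have : (1 + (η - κ) * Fmax * M)⁻¹ ≤ (1 + (η - κ) * (v ⬝ᵥ A *ᵥ v))⁻¹ := by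
    apply inv_anti₀ hden
    nlinarith
  gcongr

/-- Windowed-sum bound: with Δ_max = 1 + (η−κ)F_max·M and F_{i−1} ≤ F_max·I on the window,
Σ_{i=k−ΔT}^{k−1} φ_iφ_iᵀ/Δ_max ≤ (λ/κ)((λ^ΔT−1)/(λ−1)) F_{k−1}⁻¹ in the Loewner order. -/
theorem stmt_2 {n : ℕ} (hn : 1 ≤ n) (φ : ℕ → Fin n → ℝ)
    (l κ η : ℝ) (hl : 1 < l) (hκ : 0 < κ) (hη : 0 < η) (hηκ : κ ≤ η)
    (F : ℕ → Matrix (Fin n) (Fin n) ℝ)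
    (hF0 : (F 0).PosDef)
    (hFpos : ∀ k : ℕ, (F k).PosDef)
    (hFrec : ∀ k : ℕ, 1 ≤ k →
      F k = l • (F (k - 1) -
        (κ / (1 + η * (φ k ⬝ᵥ (F (k - 1)).mulVec (φ k)))) •
          (F (k - 1) * vecMulVec (φ k) (φ k) * F (k - 1))))
    (M : ℝ) (hφ : ∀ i : ℕ, 1 ≤ i → φ i ⬝ᵥ φ i ≤ M)
    (Fmax : ℝ) (hFmaxpos : 0 < Fmax)
    (ΔT k : ℕ) (hΔT : 1 ≤ ΔT) (hk : ΔT < k)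
    (hFle : ∀ i : ℕ, k - ΔT ≤ i → i ≤ k - 1 →
      (Fmax • (1 : Matrix (Fin n) (Fin n) ℝ) - F (i - 1)).PosSemidef) :
    (((l / κ) * ((l ^ ΔT - 1) / (l - 1))) • (F (k - 1))⁻¹ -
      (1 + (η - κ) * Fmax * M)⁻¹ •
        ∑ i ∈ Finset.Ico (k - ΔT) k, vecMulVec (φ i) (φ i)).PosSemidef := by
  obtain ⟨b, hb⟩ : ∃ b, k = b + 1 + ΔT := ⟨k - ΔT - 1, by omega⟩
  subst hb
  have ha : b + 1 + ΔT - ΔT = b + 1 := by omega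
  have hlast : b + 1 + ΔT - 1 = b + ΔT := by omega
  rw [ha, hlast] at hFle
  rw [ha, hlast]
  set D := (1 + (η - κ) * Fmax * M)⁻¹ with hD
  have hM : 0 ≤ M := le_trans (by simpa using dotProduct_star_self_nonneg (φ 1)) (hφ 1 le_rfl)
  have hD0 : 0 ≤ D := by
    have : 0 ≤ η - κ := by linarith
    positivity
  have key : ∀ x : Fin n → ℝ, ∀ m, m ≤ ΔT →
      D * ∑ i ∈ Finset.Ico (b + 1) (b + 1 + m), (φ i ⬝ᵥ x) ^ 2 ≤
        (l / κ) * (∑ j ∈ Finset.range m, l ^ j) * (x ⬝ᵥ (F (b + m))⁻¹ *ᵥ x) := by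
    intro x m
    induction m with
    | zero => simp
    | succ m ih =>
      intro hm
      have ih := ih (by omega)
      have hs := quad_step (F (b + m)) (hFpos _) (φ (b + m + 1)) x l κ η M Fmax hl hκ hηκ
        (hφ _ (by omega)) hFmaxpos (hFle (b + m + 1) (by omega) (by omega))
      have hr := hFrec (b + m + 1) (by omega)
      rw [Nat.add_sub_cancel] at hr
      rw [← hr, ← hD] at hs
      have hg0 : 0 ≤ x ⬝ᵥ (F (b + m))⁻¹ *ᵥ x := by
        simpa using (hFpos (b + m)).inv.posSemidef.dotProduct_mulVec_nonneg x
      rw [← add_assoc (b + 1), Finset.sum_Ico_succ_top (by omega), geom_sum_succ,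
        show b + 1 + m = b + m + 1 by omega, ← add_assoc b]
      rw [show b + 1 + m = b + m + 1 by omega] at ih
      have hS : 0 ≤ ∑ j ∈ Finset.range m, l ^ j := Finset.sum_nonneg fun j _ => by positivity
      generalize (∑ j ∈ Finset.range m, l ^ j) = S at *
      generalize x ⬝ᵥ (F (b + m))⁻¹ *ᵥ x = g at *
      generalize x ⬝ᵥ (F (b + m + 1))⁻¹ *ᵥ x = g' at *
      have ht : 0 ≤ D * (φ (b + m + 1) ⬝ᵥ x) ^ 2 := by positivity
      rw [mul_add]
      generalize D * (φ (b + m + 1) ⬝ᵥ x) ^ 2 = t at *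
      have h1 : g ≤ l * g' := by nlinarith
      have h2 : t ≤ l / κ * g' := by
        rw [div_mul_eq_mul_div, le_div_iff₀ hκ]
        linarith
      have h3 : l / κ * S * g ≤ l / κ * S * (l * g') := by gcongr
      linarith
  rw [← geom_sum_eq hl.ne']
  refine PosSemidef.of_dotProduct_mulVec_nonneg ?_ fun x => ?_
  · have hsum : (∑ i ∈ Finset.Ico (b + 1) (b + 1 + ΔT), vecMulVec (φ i) (φ i)).IsHermitian := by
      unfold IsHermitian
      rw [conjTranspose_sum]
      exact Finset.sum_congr rfl fun i _ => by simp [conjTranspose_vecMulVec]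
    exact ((hFpos _).inv.isHermitian.smul (IsSelfAdjoint.all _)).sub
      (hsum.smul (IsSelfAdjoint.all _))
  · have := key x ΔT le_rfl
    simp only [star_trivial, sub_mulVec, smul_mulVec, dotProduct_sub, dotProduct_smul,
      smul_eq_mul, sum_mulVec, dotProduct_sum, quad_vecMulVec]
    linarith
end

section
/- Fix k ≥ 1 and suppose F_{k−1} ≤ F_max·I for some F_max > 0 and ‖φ_k‖² ≤ M. With Δ_max = 1 + (η − κ)·F_max·M, the rank-one matrix φ_k φ_kᵀ satisfies φ_k φ_kᵀ / Δ_max ≤ (λ/κ)·F_k^{−1} in the Loewner order. -/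
open Matrix

/-!
By the Sherman-Morrison formula, with `s = φᵀ F_{k-1} φ` and `Δ = 1 + (η - κ) s`,
`F_k⁻¹ = λ⁻¹ (F_{k-1}⁻¹ + (κ / Δ) φ φᵀ)`, so that
`(λ/κ) F_k⁻¹ - Δ_max⁻¹ φ φᵀ = κ⁻¹ F_{k-1}⁻¹ + (Δ⁻¹ - Δ_max⁻¹) φ φᵀ`.
Both terms are positive semidefinite, because `s ≤ F_max ‖φ‖² ≤ F_max M` gives `Δ ≤ Δ_max`.
-/

lemma vecMulVec_mul_mul_vecMulVec {n : ℕ} (A : Matrix (Fin n) (Fin n) ℝ) (v : Fin n → ℝ) :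
    vecMulVec v v * A * vecMulVec v v = (v ⬝ᵥ A.mulVec v) • vecMulVec v v := by
  rw [vecMulVec_mul, vecMulVec_mul_vecMulVec, ← dotProduct_mulVec, vecMulVec_smul]

/-- Sherman-Morrison for the scaled rank-one downdate; the hypothesis on `c`, `d` is the scalar
condition that makes the coefficient of `A v vᵀ` vanish. -/
lemma inv_smul_sub_rankOne {n : ℕ} (A : Matrix (Fin n) (Fin n) ℝ) (hA : IsUnit A.det)
    (v : Fin n → ℝ) (l c d : ℝ) (hl : l ≠ 0)
    (hcd : d - c - c * d * (v ⬝ᵥ A.mulVec v) = 0) :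
    (l • (A - c • (A * vecMulVec v v * A)))⁻¹ = l⁻¹ • (A⁻¹ + d • vecMulVec v v) := by
  apply Matrix.inv_eq_right_inv
  have h1 : A * vecMulVec v v * A * A⁻¹ = A * vecMulVec v v := by
    rw [Matrix.mul_assoc, Matrix.mul_nonsing_inv A hA, Matrix.mul_one]
  have h2 : A * vecMulVec v v * A * vecMulVec v v
      = (v ⬝ᵥ A.mulVec v) • (A * vecMulVec v v) := by
    rw [Matrix.mul_assoc A, Matrix.mul_assoc A, vecMulVec_mul_mul_vecMulVec, Matrix.mul_smul]
  rw [Matrix.smul_mul, Matrix.mul_smul, smul_smul, mul_inv_cancel₀ hl, one_smul,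
    Matrix.sub_mul, Matrix.mul_add, Matrix.mul_nonsing_inv A hA, Matrix.smul_mul,
    Matrix.mul_add, h1, Matrix.mul_smul, Matrix.mul_smul, h2]
  have h3 : (1 : Matrix (Fin n) (Fin n) ℝ) + d • (A * vecMulVec v v)
      - c • (A * vecMulVec v v + d • (v ⬝ᵥ A.mulVec v) • (A * vecMulVec v v))
      = 1 + (d - c - c * d * (v ⬝ᵥ A.mulVec v)) • (A * vecMulVec v v) := by
    module
  rw [h3, hcd, zero_smul, add_zero]

/-- Rank-one bound: if F_{k−1} ≤ F_max·I and ‖φ_k‖² ≤ M, then with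
Δ_max = 1 + (η−κ)F_max·M one has φ_kφ_kᵀ/Δ_max ≤ (λ/κ)·F_k⁻¹ in the Loewner order. -/
theorem stmt_3 {n : ℕ} (hn : 1 ≤ n) (φ : ℕ → Fin n → ℝ)
    (l κ η : ℝ) (hl : 0 < l) (hκ : 0 < κ) (hη : 0 < η) (hηκ : κ ≤ η)
    (F : ℕ → Matrix (Fin n) (Fin n) ℝ)
    (hF0 : (F 0).PosDef)
    (hFpos : ∀ k : ℕ, (F k).PosDef)
    (hFrec : ∀ k : ℕ, 1 ≤ k →
      F k = l • (F (k - 1) -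
        (κ / (1 + η * (φ k ⬝ᵥ (F (k - 1)).mulVec (φ k)))) •
          (F (k - 1) * vecMulVec (φ k) (φ k) * F (k - 1))))
    (k : ℕ) (hk : 1 ≤ k)
    (Fmax : ℝ) (hFmaxpos : 0 < Fmax)
    (hFle : (Fmax • (1 : Matrix (Fin n) (Fin n) ℝ) - F (k - 1)).PosSemidef)
    (M : ℝ) (hφ : φ k ⬝ᵥ φ k ≤ M) :
    ((l / κ) • (F k)⁻¹ -
      (1 + (η - κ) * Fmax * M)⁻¹ • vecMulVec (φ k) (φ k)).PosSemidef := by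
  have hA := hFpos (k - 1)
  have hFk := hFrec k hk
  generalize F (k - 1) = A at *
  generalize φ k = v at *
  have hs0 : 0 ≤ v ⬝ᵥ A.mulVec v := by
    simpa using hA.posSemidef.dotProduct_mulVec_nonneg v
  have hs1 : v ⬝ᵥ A.mulVec v ≤ Fmax * M := by
    have h := hFle.dotProduct_mulVec_nonneg v
    simp only [star_trivial, Matrix.sub_mulVec, Matrix.smul_mulVec, Matrix.one_mulVec,
      dotProduct_sub, dotProduct_smul, smul_eq_mul] at h
    have h' := mul_le_mul_of_nonneg_left hφ hFmaxpos.le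
    linarith
  generalize hs : v ⬝ᵥ A.mulVec v = s at *
  have hηκ' : 0 ≤ η - κ := sub_nonneg.2 hηκ
  have hΔ : 0 < 1 + (η - κ) * s := by positivity
  have hN : 0 < 1 + η * s := by positivity
  have hle : 1 + (η - κ) * s ≤ 1 + (η - κ) * Fmax * M := by
    have := mul_le_mul_of_nonneg_left hs1 hηκ'
    linarith
  have hinv : (F k)⁻¹ = l⁻¹ • (A⁻¹ + (κ / (1 + (η - κ) * s)) • vecMulVec v v) := by
    rw [hFk]
    apply inv_smul_sub_rankOne A hA.det_pos.ne'.isUnit v l _ _ hl.ne'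
    rw [hs]
    field_simp
    ring
  have hsplit : (l / κ) • (F k)⁻¹ - (1 + (η - κ) * Fmax * M)⁻¹ • vecMulVec v v
      = κ⁻¹ • A⁻¹ + ((1 + (η - κ) * s)⁻¹ - (1 + (η - κ) * Fmax * M)⁻¹) • vecMulVec v v := by
    have e1 : l / κ * l⁻¹ = κ⁻¹ := by field_simp
    have e2 : κ⁻¹ * (κ / (1 + (η - κ) * s)) = (1 + (η - κ) * s)⁻¹ := by field_simp
    rw [hinv, smul_smul, e1, smul_add, smul_smul, e2, sub_smul, add_sub_assoc]
  rw [hsplit]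
  refine (hA.inv.posSemidef.smul (inv_nonneg.2 hκ.le)).add (PosSemidef.smul ?_ ?_)
  · simpa using posSemidef_vecMulVec_self_star v
  · exact sub_nonneg.2 (inv_anti₀ hΔ hle)
end

section
/- Suppose the regressors satisfy the PE condition with constants 0 < ε₁ ≤ ε₂ and window ΔT ≥ 1 and that λ > 1. Then for all k ≥ ΔT, F_k^{−1} ≤ λ^{ΔT−k}·F_{ΔT−1}^{−1} + (κ/λ)·((1 − λ^{−k})/(1 − λ^{−ΔT}))·ε₂·I in the Loewner order. -/
open Matrix

/-!
By the Sherman–Morrison formula, with `a = φ_kᵀ F_{k-1} φ_k`,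
`F_k⁻¹ = λ⁻¹ (F_{k-1}⁻¹ + κ / (1 + (η - κ) a) · φ_k φ_kᵀ)` (`inv_rank_one_update`). As `κ ≤ η`, the
quadratic form `y k = xᵀ F_k⁻¹ x` satisfies `y k ≤ λ⁻¹ y (k-1) + (κ/λ) (φ_kᵀ x)²` for each fixed
vector `x`.

The rest is scalar (`le_of_contraction_of_window`). Unrolling the recursion over at most `ΔT` steps
and bounding the weights of the forcing terms by `1`, the upper excitation bound shows that the
forcing accumulated over one window costs at most `(κ/λ) ε₂ |x|²`. Strong induction on `k` in jumps
of length `ΔT` then sums the geometric series with ratio `λ^{-ΔT}`: the bound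
`(1 - r^k) / (1 - r^ΔT)` with `r = λ⁻¹` is a fixed point of `s_k = 1 + r^ΔT s_{k-ΔT}`.
-/

/-- Sherman–Morrison for the update `F ↦ l (F - κ F v vᵀ F / (1 + η vᵀ F v))`. -/
lemma inv_rank_one_update {n : ℕ} (F : Matrix (Fin n) (Fin n) ℝ) (hF : F.PosDef)
    (v : Fin n → ℝ) (l κ η : ℝ) (hl : 0 < l) (hη : 0 < η) (hηκ : κ ≤ η) :
    (l • (F - (κ / (1 + η * (v ⬝ᵥ F.mulVec v))) • (F * vecMulVec v v * F)))⁻¹ =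
      l⁻¹ • (F⁻¹ + (κ / (1 + (η - κ) * (v ⬝ᵥ F.mulVec v))) • vecMulVec v v) := by
  have ha : 0 ≤ v ⬝ᵥ F.mulVec v := by
    simpa using hF.posSemidef.dotProduct_mulVec_nonneg v
  have hVFV : vecMulVec v v * F * vecMulVec v v = (v ⬝ᵥ F.mulVec v) • vecMulVec v v := by
    rw [vecMulVec_mul, vecMulVec_mul_vecMulVec, ← dotProduct_mulVec, vecMulVec_smul]
  have hFP : F * F⁻¹ = 1 := Matrix.mul_nonsing_inv F (by
    exact (Matrix.isUnit_iff_isUnit_det F).mp hF.isUnit)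
  generalize v ⬝ᵥ F.mulVec v = a at *
  have h1 : (1 + η * a) ≠ 0 := by positivity
  have h2 : (1 + (η - κ) * a) ≠ 0 := by
    have := mul_nonneg (sub_nonneg.2 hηκ) ha
    positivity
  have hc : κ / (1 + (η - κ) * a) - κ / (1 + η * a)
      - κ / (1 + η * a) * (κ / (1 + (η - κ) * a)) * a = 0 := by
    field_simp
    ring
  generalize κ / (1 + (η - κ) * a) = d at *
  generalize κ / (1 + η * a) = c at *
  generalize vecMulVec v v = V at *
  apply Matrix.inv_eq_right_inv
  rw [smul_mul_smul_comm, mul_inv_cancel₀ hl.ne', one_smul]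
  have e1 : F * V * F * F⁻¹ = F * V := by rw [Matrix.mul_assoc, hFP, Matrix.mul_one]
  have e2 : F * V * F * V = a • (F * V) := by
    rw [Matrix.mul_assoc F V F, Matrix.mul_assoc F, hVFV, Matrix.mul_smul]
  have e3 : (F - c • (F * V * F)) * (F⁻¹ + d • V) = 1 + (d - c - c * d * a) • (F * V) := by
    rw [Matrix.sub_mul, Matrix.mul_add, Matrix.mul_add, hFP, Matrix.smul_mul, Matrix.smul_mul,
      Matrix.mul_smul, Matrix.mul_smul, e1, e2]
    module
  rw [e3, hc, zero_smul, add_zero]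

/-- Unrolling `y (k+1) ≤ r * y k + c * q (k+1)` over `j` steps, with the weights of the forcing terms
bounded by `1`. -/
lemma unroll_contraction (y q : ℕ → ℝ) (r c : ℝ) (hr0 : 0 < r) (hr1 : r < 1) (hc : 0 ≤ c)
    (hq : ∀ k, 0 ≤ q k) (hrec : ∀ k, y (k + 1) ≤ r * y k + c * q (k + 1)) (m j : ℕ) :
    y (m + j) ≤ r ^ j * y m + c * ∑ i ∈ Finset.Ico (m + 1) (m + j + 1), q i := by
  induction j with
  | zero => simp
  | succ j ih =>
    have hS : 0 ≤ ∑ i ∈ Finset.Ico (m + 1) (m + j + 1), q i :=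
      Finset.sum_nonneg fun i _ => hq i
    have h := hrec (m + j)
    rw [← add_assoc, Finset.sum_Ico_succ_top (by omega)]
    have h2 := mul_le_mul_of_nonneg_left ih hr0.le
    have h3 := mul_le_mul_of_nonneg_right hr1.le (mul_nonneg hc hS)
    rw [pow_succ]
    linarith

lemma le_of_contraction_of_window (y q : ℕ → ℝ) (r c B : ℝ) (T : ℕ) (hT : 1 ≤ T)
    (hr0 : 0 < r) (hr1 : r < 1) (hc : 0 ≤ c) (hy : ∀ k, 0 ≤ y k)
    (hq : ∀ k, 0 ≤ q k) (hrec : ∀ k, y (k + 1) ≤ r * y k + c * q (k + 1))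
    (hwin : ∀ k, T < k → ∑ i ∈ Finset.Ico (k - T) k, q i ≤ B) (k : ℕ) (hk : T ≤ k) :
    y k ≤ r ^ (k - T) * y (T - 1) + c * ((1 - r ^ k) / (1 - r ^ T)) * B := by
  have hB : 0 ≤ B := (Finset.sum_nonneg fun i _ => hq i).trans (hwin (T + 1) (by omega))
  have hD : 0 < 1 - r ^ T := sub_pos.2 (pow_lt_one₀ hr0.le hr1 (by omega))
  induction k using Nat.strong_induction_on with
  | _ k ih =>
  by_cases hk2 : k < 2 * T
  · -- a single, possibly truncated, window reaches back to `T - 1`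
    have h := unroll_contraction y q r c hr0 hr1 hc hq hrec (T - 1) (k - T + 1)
    rw [show T - 1 + (k - T + 1) = k by omega, show T - 1 + 1 = T by omega] at h
    have hs : ∑ i ∈ Finset.Ico T (k + 1), q i ≤ B := by
      refine (Finset.sum_le_sum_of_subset_of_nonneg ?_ fun i _ _ => hq i).trans
        (hwin (k + 1) (by omega))
      exact Finset.Ico_subset_Ico (by omega) le_rfl
    have h1 : 1 ≤ (1 - r ^ k) / (1 - r ^ T) := by
      rw [le_div_iff₀ hD]
      linarith [pow_le_pow_of_le_one hr0.le hr1.le hk]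
    have h2 : r ^ (k - T + 1) * y (T - 1) ≤ r ^ (k - T) * y (T - 1) :=
      mul_le_mul_of_nonneg_right
        (pow_le_pow_of_le_one hr0.le hr1.le (by omega)) (hy _)
    have h3 := mul_le_mul_of_nonneg_left hs hc
    have h4 := mul_le_mul_of_nonneg_right h1 (mul_nonneg hc hB)
    linarith
  · have h := unroll_contraction y q r c hr0 hr1 hc hq hrec (k - T) T
    rw [show k - T + T = k by omega, show k - T + 1 = k + 1 - T by omega] at h
    have hs := mul_le_mul_of_nonneg_left (hwin (k + 1) (by omega)) hc
    have hi := mul_le_mul_of_nonneg_left (ih (k - T) (by omega) (by omega)) (pow_pos hr0 T).le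
    have e1 : r ^ T * r ^ (k - T - T) = r ^ (k - T) := by
      rw [← pow_add]; congr 1; omega
    have e2 : r ^ T * r ^ (k - T) = r ^ k := by
      rw [← pow_add]; congr 1; omega
    have e3 : r ^ T * ((1 - r ^ (k - T)) / (1 - r ^ T)) + 1 = (1 - r ^ k) / (1 - r ^ T) := by
      rw [← e2]
      field_simp
      ring
    rw [← e1, ← e3]
    linarith

/-- Intermediate bound in Lemma 2: for k ≥ ΔT,
F_k⁻¹ ≤ λ^{ΔT−k}·F_{ΔT−1}⁻¹ + (κ/λ)((1 − λ^{−k})/(1 − λ^{−ΔT}))·ε₂·I. -/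
theorem stmt_5 {n : ℕ} (hn : 1 ≤ n) (φ : ℕ → Fin n → ℝ)
    (l κ η : ℝ) (hl : 1 < l) (hκ : 0 < κ) (hη : 0 < η) (hηκ : κ ≤ η)
    (F : ℕ → Matrix (Fin n) (Fin n) ℝ)
    (hF0 : (F 0).PosDef)
    (hFpos : ∀ k : ℕ, (F k).PosDef)
    (hFrec : ∀ k : ℕ, 1 ≤ k →
      F k = l • (F (k - 1) -
        (κ / (1 + η * (φ k ⬝ᵥ (F (k - 1)).mulVec (φ k)))) •
          (F (k - 1) * vecMulVec (φ k) (φ k) * F (k - 1))))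
    (ε₁ ε₂ : ℝ) (ΔT : ℕ) (hε₁ : 0 < ε₁) (hε : ε₁ ≤ ε₂) (hΔT : 1 ≤ ΔT)
    (hPE : ∀ k : ℕ, ΔT < k →
      ((∑ i ∈ Finset.Ico (k - ΔT) k, vecMulVec (φ i) (φ i)) -
          ε₁ • (1 : Matrix (Fin n) (Fin n) ℝ)).PosSemidef ∧
        (ε₂ • (1 : Matrix (Fin n) (Fin n) ℝ) -
          ∑ i ∈ Finset.Ico (k - ΔT) k, vecMulVec (φ i) (φ i)).PosSemidef) :
    ∀ k : ℕ, ΔT ≤ k →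
      ((l ^ ((ΔT : ℤ) - (k : ℤ))) • (F (ΔT - 1))⁻¹ +
        ((κ / l) * ((1 - (l ^ k)⁻¹) / (1 - (l ^ ΔT)⁻¹)) * ε₂) •
          (1 : Matrix (Fin n) (Fin n) ℝ) -
        (F k)⁻¹).PosSemidef := by
  intro k hk
  have hl0 : 0 < l := by linarith
  have hquad : ∀ (v x : Fin n → ℝ), x ⬝ᵥ (vecMulVec v v).mulVec x = (v ⬝ᵥ x) ^ 2 := by
    intro v x
    rw [vecMulVec_mulVec]
    simp [dotProduct_comm x v, sq]
  have hherm : ∀ m (s : ℝ), (s • (F m)⁻¹).IsHermitian := fun m s => by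
    have := (hFpos m).inv.isHermitian
    unfold Matrix.IsHermitian at *
    rw [conjTranspose_smul, this]; simp
  refine PosSemidef.of_dotProduct_mulVec_nonneg ?_ fun x => ?_
  · refine ((hherm _ _).add ?_).sub (by simpa using hherm k 1)
    unfold Matrix.IsHermitian
    rw [conjTranspose_smul]; simp
  have key := le_of_contraction_of_window (fun m => x ⬝ᵥ (F m)⁻¹.mulVec x)
    (fun m => (φ m ⬝ᵥ x) ^ 2) l⁻¹ (κ / l) (ε₂ * (x ⬝ᵥ x)) ΔT hΔT (by positivity)
    (inv_lt_one_of_one_lt₀ hl) (by positivity)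
    (fun m => by simpa using (hFpos m).inv.posSemidef.dotProduct_mulVec_nonneg x)
    (fun m => sq_nonneg _) ?_ ?_ k hk
  · have e : l ^ ((ΔT : ℤ) - (k : ℤ)) = l⁻¹ ^ (k - ΔT) := by
      rw [inv_pow, ← zpow_natCast, ← _root_.zpow_neg, Nat.cast_sub hk, neg_sub]
    rw [e, ← inv_pow, ← inv_pow]
    simp only [star_trivial, sub_mulVec, add_mulVec, smul_mulVec, one_mulVec, dotProduct_sub,
      dotProduct_add, dotProduct_smul, smul_eq_mul]
    linarith
  · intro m
    have ha : 0 ≤ φ (m + 1) ⬝ᵥ (F m).mulVec (φ (m + 1)) := by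
      simpa using (hFpos m).posSemidef.dotProduct_mulVec_nonneg (φ (m + 1))
    have h := hFrec (m + 1) (by omega)
    rw [Nat.add_sub_cancel] at h
    have hinv := inv_rank_one_update (F m) (hFpos m) (φ (m + 1)) l κ η hl0 hη hηκ
    rw [← h] at hinv
    have hd : κ / (1 + (η - κ) * (φ (m + 1) ⬝ᵥ (F m).mulVec (φ (m + 1)))) ≤ κ := by
      apply div_le_self hκ.le
      linarith [mul_nonneg (sub_nonneg.2 hηκ) ha]
    have h5 := mul_le_mul_of_nonneg_left
      (mul_le_mul_of_nonneg_right hd (sq_nonneg (φ (m + 1) ⬝ᵥ x))) (inv_pos.2 hl0).le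
    simp only [hinv, add_mulVec, smul_mulVec, dotProduct_add, dotProduct_smul, smul_eq_mul, hquad]
    rw [div_eq_mul_inv κ l]
    linarith
  · intro m hm
    have h := (hPE m hm).2.dotProduct_mulVec_nonneg x
    simp only [star_trivial, sub_mulVec, smul_mulVec, one_mulVec, dotProduct_sub,
      dotProduct_smul, smul_eq_mul, sum_mulVec, dotProduct_sum, hquad] at h
    linarith
end

section
/- For every k ≥ 1, the matrix F_k is invertible and its inverse satisfies the identity F_k^{−1} = (1/λ)·F_{k−1}^{−1} + (κ/λ)·φ_k φ_kᵀ / (𝒩_k − κ·φ_kᵀ F_{k−1} φ_k), where 𝒩_k − κ·φ_kᵀ F_{k−1} φ_k = 1 + (η − κ)·φ_kᵀ F_{k−1} φ_k > 0. -/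
open Matrix

/-! The proof is a Sherman–Morrison computation. Write `s = φᵀFφ ≥ 0` and `P = φφᵀ`, so that
`P F P = s P`. Multiplying `Fnext` by the proposed inverse leaves `1` plus a multiple of `F P`, with
coefficient `κ / (N - κ s) * (1 - κ s / N) - κ / N = 0`. A right inverse of a square matrix is its
inverse, which also gives invertibility. -/

/-- Matrix inversion lemma applied to one step of the gain recursion: with F_{k−1} ≻ 0,
F_k = λ(F_{k−1} − κF_{k−1}φφᵀF_{k−1}/𝒩) is invertible and
F_k⁻¹ = (1/λ)F_{k−1}⁻¹ + (κ/λ)·φφᵀ/(𝒩 − κφᵀF_{k−1}φ), where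
𝒩 − κφᵀF_{k−1}φ = 1 + (η − κ)φᵀF_{k−1}φ > 0. -/
theorem stmt_6 {n : ℕ} (hn : 1 ≤ n) (φ : Fin n → ℝ)
    (l κ η : ℝ) (hl : 0 < l) (hκ : 0 < κ) (hη : 0 < η) (hηκ : κ ≤ η)
    (Fprev : Matrix (Fin n) (Fin n) ℝ) (hFprev : Fprev.PosDef)
    (N : ℝ) (hN : N = 1 + η * (φ ⬝ᵥ Fprev.mulVec φ))
    (Fnext : Matrix (Fin n) (Fin n) ℝ)
    (hFnext : Fnext = l • (Fprev - (κ / N) • (Fprev * vecMulVec φ φ * Fprev))) :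
    IsUnit Fnext.det ∧
      N - κ * (φ ⬝ᵥ Fprev.mulVec φ) = 1 + (η - κ) * (φ ⬝ᵥ Fprev.mulVec φ) ∧
      0 < N - κ * (φ ⬝ᵥ Fprev.mulVec φ) ∧
      Fnext⁻¹ = (1 / l) • Fprev⁻¹ +
        ((κ / l) / (N - κ * (φ ⬝ᵥ Fprev.mulVec φ))) • vecMulVec φ φ := by
  have hs : 0 ≤ φ ⬝ᵥ Fprev.mulVec φ := by
    simpa using hFprev.posSemidef.dotProduct_mulVec_nonneg φ
  have hdet : IsUnit Fprev.det := hFprev.det_pos.ne'.isUnit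
  -- The rank-one identity `φφᵀ F φφᵀ = (φᵀFφ) φφᵀ`.
  have hP : vecMulVec φ φ * Fprev * vecMulVec φ φ
      = (φ ⬝ᵥ Fprev.mulVec φ) • vecMulVec φ φ := by
    rw [Matrix.mul_assoc, mul_vecMulVec, vecMulVec_mul_vecMulVec, vecMulVec_smul]
  generalize φ ⬝ᵥ Fprev.mulVec φ = s at *
  generalize vecMulVec φ φ = P at *
  have hNpos : 0 < N := by rw [hN]; positivity
  have hEq : N - κ * s = 1 + (η - κ) * s := by rw [hN]; ring
  have hpos : 0 < N - κ * s := by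
    rw [hEq]
    have := mul_nonneg (sub_nonneg.2 hηκ) hs
    linarith
  have hFPFP : Fprev * P * Fprev * P = s • (Fprev * P) := by
    rw [Matrix.mul_assoc Fprev P Fprev, Matrix.mul_assoc, hP, Matrix.mul_smul]
  have hFPFi : Fprev * P * Fprev * Fprev⁻¹ = Fprev * P := by
    rw [Matrix.mul_assoc, mul_nonsing_inv _ hdet, Matrix.mul_one]
  have hmul : Fnext * ((1 / l) • Fprev⁻¹ + ((κ / l) / (N - κ * s)) • P) = 1 := by
    rw [hFnext]
    simp only [Matrix.smul_mul, Matrix.mul_add, Matrix.sub_mul, Matrix.mul_smul,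
      mul_nonsing_inv _ hdet, hFPFi, hFPFP]
    -- What remains is `1` plus a multiple of `F φφᵀ` whose coefficient vanishes.
    match_scalars
    · field_simp
    · have := hpos.ne'
      field_simp
      ring
  exact ⟨isUnit_det_of_right_inverse hmul, hEq, hpos, inv_eq_right_inv hmul⟩
end

section
/- If F₀ is symmetric positive definite, then for every k ≥ 0 the matrix F_k produced by the gain-matrix recursion is symmetric positive definite. -/
open Matrix

/-!
Induction on `k`. For `A = F (k - 1)` positive definite and `x ≠ 0`, put `a = xᵀAx > 0`,
`b = xᵀAφ` and `q = φᵀAφ ≥ 0`. The quadratic form of the updated matrix at `x` is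
`λ (a - κ b² / (1 + η q))`, and the Cauchy-Schwarz inequality `b² ≤ a q` for the form `A`
(`sq_dotProduct_mulVec_le`) gives `κ b² ≤ η a q < a (1 + η q)`, so this value is positive.
-/

theorem dotProduct_mulVec_symm {n : ℕ} {A : Matrix (Fin n) (Fin n) ℝ} (hA : A.PosDef)
    (x v : Fin n → ℝ) : v ⬝ᵥ A *ᵥ x = x ⬝ᵥ A *ᵥ v := by
  have hT : Aᵀ = A := by simpa using hA.isHermitian.eq
  rw [dotProduct_mulVec, ← mulVec_transpose, hT, dotProduct_comm]

/-- Cauchy-Schwarz for the form `A`, from nonnegativity of the form at `a • v - b • x`. -/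
theorem sq_dotProduct_mulVec_le {n : ℕ} {A : Matrix (Fin n) (Fin n) ℝ} (hA : A.PosDef)
    {x : Fin n → ℝ} (hx : x ≠ 0) (v : Fin n → ℝ) :
    (x ⬝ᵥ A *ᵥ v) ^ 2 ≤ (x ⬝ᵥ A *ᵥ x) * (v ⬝ᵥ A *ᵥ v) := by
  have ha : 0 < x ⬝ᵥ A *ᵥ x := by simpa using hA.dotProduct_mulVec_pos hx
  have hy := hA.posSemidef.dotProduct_mulVec_nonneg
    ((x ⬝ᵥ A *ᵥ x) • v - (x ⬝ᵥ A *ᵥ v) • x)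
  simp only [star_trivial, mulVec_sub, mulVec_smul, sub_dotProduct, dotProduct_sub,
    smul_dotProduct, dotProduct_smul, smul_eq_mul, dotProduct_mulVec_symm hA x v] at hy
  have hfac : 0 ≤ (x ⬝ᵥ A *ᵥ x) *
      ((x ⬝ᵥ A *ᵥ x) * (v ⬝ᵥ A *ᵥ v) - (x ⬝ᵥ A *ᵥ v) ^ 2) := by
    linarith
  exact sub_nonneg.mp (nonneg_of_mul_nonneg_right hfac ha)

/-- One step of the recursion, without the factor `λ`, preserves positive definiteness. -/
theorem posDef_gain_step {n : ℕ} {A : Matrix (Fin n) (Fin n) ℝ} (hA : A.PosDef)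
    (v : Fin n → ℝ) {κ η : ℝ} (hη : 0 < η) (hηκ : κ ≤ η) :
    (A - (κ / (1 + η * (v ⬝ᵥ A *ᵥ v))) • (A * vecMulVec v v * A)).PosDef := by
  have hT : Aᵀ = A := by simpa using hA.isHermitian.eq
  refine PosDef.of_dotProduct_mulVec_pos ?_ fun x hx => ?_
  · simp [IsHermitian, conjTranspose_eq_transpose_of_trivial, transpose_sub, transpose_smul,
      transpose_mul, transpose_vecMulVec, hT, Matrix.mul_assoc]
  · have ha : 0 < x ⬝ᵥ A *ᵥ x := by simpa using hA.dotProduct_mulVec_pos hx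
    have hq : 0 ≤ v ⬝ᵥ A *ᵥ v := by simpa using hA.posSemidef.dotProduct_mulVec_nonneg v
    have hcs := sq_dotProduct_mulVec_le hA hx v
    have hform : x ⬝ᵥ (A * vecMulVec v v * A) *ᵥ x = (x ⬝ᵥ A *ᵥ v) ^ 2 := by
      rw [← mulVec_mulVec, ← mulVec_mulVec, vecMulVec_mulVec]
      simp [mulVec_smul, dotProduct_mulVec_symm hA x v, sq]
    have hN : 0 < 1 + η * (v ⬝ᵥ A *ᵥ v) := by positivity
    simp only [star_trivial, sub_mulVec, smul_mulVec, dotProduct_sub, dotProduct_smul, hform,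
      smul_eq_mul]
    rw [sub_pos, div_mul_eq_mul_div, div_lt_iff₀ hN]
    have h1 := mul_le_mul_of_nonneg_right hηκ (sq_nonneg (x ⬝ᵥ A *ᵥ v))
    have h2 := mul_le_mul_of_nonneg_left hcs hη.le
    linarith

/-- If F₀ ≻ 0, every gain matrix F_k produced by the recursion
F_k = λ(F_{k−1} − κ F_{k−1}φ_kφ_kᵀF_{k−1}/𝒩_k), 𝒩_k = 1 + η φ_kᵀF_{k−1}φ_k,
is symmetric positive definite. -/
theorem stmt_7 {n : ℕ} (hn : 1 ≤ n) (φ : ℕ → Fin n → ℝ)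
    (l κ η : ℝ) (hl : 0 < l) (hκ : 0 < κ) (hη : 0 < η) (hηκ : κ ≤ η)
    (F : ℕ → Matrix (Fin n) (Fin n) ℝ)
    (hF0 : (F 0).PosDef)
    (hFrec : ∀ k : ℕ, 1 ≤ k →
      F k = l • (F (k - 1) -
        (κ / (1 + η * (φ k ⬝ᵥ (F (k - 1)).mulVec (φ k)))) •
          (F (k - 1) * vecMulVec (φ k) (φ k) * F (k - 1)))) :
    ∀ k : ℕ, (F k).PosDef := by
  intro k
  induction k with
  | zero => exact hF0
  | succ k ih =>
    rw [hFrec (k + 1) (Nat.le_add_left 1 k), Nat.add_sub_cancel]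
    exact (posDef_gain_step ih _ hη hηκ).smul hl
end

section
/- If λ = 1 and the regressors satisfy the PE condition with constants 0 < ε₁ ≤ ε₂ and window ΔT ≥ 1, then F_k → 0 as k → ∞ (entrywise, equivalently in operator norm). -/
open Matrix

/-!
The quadratic forms `x ⬝ᵥ F k *ᵥ x` are nonincreasing in `k` and nonnegative, hence convergent; by
polarization `F k` converges to some matrix `A`. The decrement of the quadratic form at step `k` is
`κ (φ_k ⬝ᵥ F_{k-1} x)² / 𝒩_k`. The upper PE bound keeps `φ_k`, and therefore `𝒩_k`, bounded, so
`φ_k ⬝ᵥ F_{k-1} x → 0` and then `φ_k ⬝ᵥ A x → 0`. Summing the squares over one window, the lower PE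
bound gives `ε₁ ‖A x‖² ≤ Σ (φ_i ⬝ᵥ A x)² → 0`, so `A x = 0` for every `x`.
-/

open Filter Topology

lemma dotProduct_vecMulVec_self {n : ℕ} (u x : Fin n → ℝ) :
    x ⬝ᵥ (vecMulVec u u *ᵥ x) = (u ⬝ᵥ x) ^ 2 := by
  rw [vecMulVec_mulVec, op_smul_eq_smul, dotProduct_smul, smul_eq_mul, dotProduct_comm x u, sq]

lemma dotProduct_sum_vecMulVec {n : ℕ} (φ : ℕ → Fin n → ℝ) (s : Finset ℕ) (x : Fin n → ℝ) :
    x ⬝ᵥ ((∑ i ∈ s, vecMulVec (φ i) (φ i)) *ᵥ x) = ∑ i ∈ s, (φ i ⬝ᵥ x) ^ 2 := by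
  rw [sum_mulVec, dotProduct_sum]
  simp only [dotProduct_vecMulVec_self]

/-- The quadratic form of the rank-one correction term. -/
lemma quadForm_correction {n : ℕ} (M : Matrix (Fin n) (Fin n) ℝ) (hM : Mᵀ = M)
    (u x : Fin n → ℝ) :
    x ⬝ᵥ ((M * vecMulVec u u * M) *ᵥ x) = (u ⬝ᵥ M *ᵥ x) ^ 2 := by
  rw [← mulVec_mulVec, ← mulVec_mulVec, dotProduct_mulVec, ← mulVec_transpose, hM,
    dotProduct_vecMulVec_self]

/-- Symmetric matrices whose quadratic forms converge pointwise converge, by polarization. -/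
lemma exists_tendsto_of_quadForm {n : ℕ} (F : ℕ → Matrix (Fin n) (Fin n) ℝ)
    (hsymm : ∀ k, (F k)ᵀ = F k)
    (h : ∀ x, ∃ c, Tendsto (fun k => x ⬝ᵥ F k *ᵥ x) atTop (𝓝 c)) :
    ∃ A, Tendsto F atTop (𝓝 A) := by
  choose c hc using h
  let e : Fin n → Fin n → ℝ := fun i => Pi.single i 1
  refine ⟨fun i j => (c (e i + e j) - c (e i) - c (e j)) / 2, ?_⟩
  refine tendsto_pi_nhds.2 fun i => tendsto_pi_nhds.2 fun j => ?_
  refine ((((hc (e i + e j)).sub (hc (e i))).sub (hc (e j))).div_const 2).congr fun k => ?_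
  have hs : F k j i = F k i j := congrFun (congrFun (hsymm k) i) j
  simp only [e, mulVec_add, dotProduct_add, add_dotProduct, mulVec_single_one,
    single_one_dotProduct, col_apply, hs]
  ring

/-- The dot product of a bounded sequence with a null sequence is a null sequence. -/
lemma tendsto_dotProduct_of_bdd {n : ℕ} (u w : ℕ → Fin n → ℝ) (B : ℝ)
    (hu : ∀ k j, |u k j| ≤ B) (hw : Tendsto w atTop (𝓝 0)) :
    Tendsto (fun k => u k ⬝ᵥ w k) atTop (𝓝 0) := by
  have key : ∀ j, Tendsto (fun k => u k j * w k j) atTop (𝓝 0) := fun j => by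
    have h0 : Tendsto (fun k => B * |w k j|) atTop (𝓝 0) := by
      simpa using ((tendsto_pi_nhds.1 hw j).abs).const_mul B
    refine squeeze_zero_norm (fun k => ?_) h0
    rw [Real.norm_eq_abs, abs_mul]
    exact mul_le_mul_of_nonneg_right (hu k j) (abs_nonneg _)
  simpa [dotProduct] using tendsto_finsetSum Finset.univ fun j _ => key j

lemma quadForm_le_of_bdd {n : ℕ} (M : Matrix (Fin n) (Fin n) ℝ) (B : ℝ) (u : Fin n → ℝ)
    (hu : ∀ j, |u j| ≤ B) :
    u ⬝ᵥ M *ᵥ u ≤ ∑ i, ∑ j, B * (|M i j| * B) := by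
  simp only [dotProduct, mulVec, Finset.mul_sum]
  refine Finset.sum_le_sum fun i _ => Finset.sum_le_sum fun j _ => ?_
  have hB : 0 ≤ B := (abs_nonneg _).trans (hu i)
  refine (le_abs_self _).trans ?_
  rw [abs_mul, abs_mul]
  gcongr
  · exact hu i
  · exact hu j

/-- When λ = 1 and the regressors are persistently exciting, the gain matrices
F_k tend to the zero matrix as k → ∞. -/
theorem stmt_10 {n : ℕ} (hn : 1 ≤ n) (φ : ℕ → Fin n → ℝ)
    (l κ η : ℝ) (hl : l = 1) (hκ : 0 < κ) (hη : 0 < η) (hηκ : κ ≤ η)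
    (F : ℕ → Matrix (Fin n) (Fin n) ℝ)
    (hF0 : (F 0).PosDef)
    (hFpos : ∀ k : ℕ, (F k).PosDef)
    (hFrec : ∀ k : ℕ, 1 ≤ k →
      F k = l • (F (k - 1) -
        (κ / (1 + η * (φ k ⬝ᵥ (F (k - 1)).mulVec (φ k)))) •
          (F (k - 1) * vecMulVec (φ k) (φ k) * F (k - 1))))
    (ε₁ ε₂ : ℝ) (ΔT : ℕ) (hε₁ : 0 < ε₁) (hε : ε₁ ≤ ε₂) (hΔT : 1 ≤ ΔT)
    (hPE : ∀ k : ℕ, ΔT < k →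
      ((∑ i ∈ Finset.Ico (k - ΔT) k, vecMulVec (φ i) (φ i)) -
          ε₁ • (1 : Matrix (Fin n) (Fin n) ℝ)).PosSemidef ∧
        (ε₂ • (1 : Matrix (Fin n) (Fin n) ℝ) -
          ∑ i ∈ Finset.Ico (k - ΔT) k, vecMulVec (φ i) (φ i)).PosSemidef) :
    Filter.Tendsto (fun k : ℕ => F k) Filter.atTop (nhds 0) := by
  subst hl
  have hsymm : ∀ k, (F k)ᵀ = F k := fun k => by
    simpa [IsHermitian, conjTranspose_eq_transpose_of_trivial] using (hFpos k).isHermitian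
  have hnonneg : ∀ k x, 0 ≤ x ⬝ᵥ F k *ᵥ x := fun k x => by
    simpa using (hFpos k).posSemidef.dotProduct_mulVec_nonneg x
  have hN : ∀ k, 0 < 1 + η * (φ (k + 1) ⬝ᵥ F k *ᵥ φ (k + 1)) := fun k => by
    have := mul_nonneg hη.le (hnonneg k (φ (k + 1)))
    linarith
  have hstep : ∀ k x, x ⬝ᵥ F (k + 1) *ᵥ x = x ⬝ᵥ F k *ᵥ x -
      κ / (1 + η * (φ (k + 1) ⬝ᵥ F k *ᵥ φ (k + 1))) * (φ (k + 1) ⬝ᵥ F k *ᵥ x) ^ 2 := by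
    intro k x
    have h := hFrec (k + 1) (by omega)
    rw [Nat.add_sub_cancel, one_smul] at h
    rw [h, sub_mulVec, dotProduct_sub, smul_mulVec, dotProduct_smul, smul_eq_mul,
      quadForm_correction _ (hsymm k)]
  have hanti : ∀ x, Antitone fun k => x ⬝ᵥ F k *ᵥ x := fun x =>
    antitone_nat_of_succ_le fun k => by
      rw [hstep]
      have := mul_nonneg (div_nonneg hκ.le (hN k).le) (sq_nonneg (φ (k + 1) ⬝ᵥ F k *ᵥ x))
      linarith
  have hconv : ∀ x, ∃ c, Tendsto (fun k => x ⬝ᵥ F k *ᵥ x) atTop (𝓝 c) := fun x =>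
    ⟨_, tendsto_atTop_ciInf (hanti x) ⟨0, by rintro _ ⟨k, rfl⟩; exact hnonneg k x⟩⟩
  obtain ⟨A, hA⟩ := exists_tendsto_of_quadForm F hsymm hconv
  have hlow : ∀ k x, ε₁ * (x ⬝ᵥ x) ≤ ∑ i ∈ Finset.Ico (k + 1) (k + 1 + ΔT), (φ i ⬝ᵥ x) ^ 2 := by
    intro k x
    have h := (hPE (k + 1 + ΔT) (by omega)).1.dotProduct_mulVec_nonneg x
    rw [Nat.add_sub_cancel, star_trivial, sub_mulVec, dotProduct_sub, dotProduct_sum_vecMulVec,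
      smul_mulVec, one_mulVec, dotProduct_smul, smul_eq_mul] at h
    linarith
  have hup : ∀ k x, ∑ i ∈ Finset.Ico (k + 1) (k + 1 + ΔT), (φ i ⬝ᵥ x) ^ 2 ≤ ε₂ * (x ⬝ᵥ x) := by
    intro k x
    have h := (hPE (k + 1 + ΔT) (by omega)).2.dotProduct_mulVec_nonneg x
    rw [Nat.add_sub_cancel, star_trivial, sub_mulVec, dotProduct_sub, dotProduct_sum_vecMulVec,
      smul_mulVec, one_mulVec, dotProduct_smul, smul_eq_mul] at h
    linarith
  have hφ : ∀ k j, |φ (k + 1) j| ≤ √ε₂ := by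
    intro k j
    have h1 := hup k (Pi.single j 1)
    have h2 := Finset.single_le_sum (f := fun i => (φ i ⬝ᵥ Pi.single j 1) ^ 2)
      (fun i _ => sq_nonneg _) (Finset.mem_Ico.2 ⟨le_refl (k + 1), by omega⟩ :
        k + 1 ∈ Finset.Ico (k + 1) (k + 1 + ΔT))
    simp only [dotProduct_single_one, Pi.single_eq_same, mul_one] at h1 h2
    exact Real.abs_le_sqrt (h2.trans h1)
  obtain ⟨C, hC⟩ : ∃ C, ∀ k, 1 + η * (φ (k + 1) ⬝ᵥ F k *ᵥ φ (k + 1)) ≤ C :=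
    ⟨_, fun k => add_le_add_right (mul_le_mul_of_nonneg_left
      ((hanti _ (Nat.zero_le k)).trans (quadForm_le_of_bdd (F 0) _ _ (hφ k))) hη.le) 1⟩
  -- `(φ_{k+1} ⬝ᵥ F_k x)² = 𝒩_{k+1} / κ` times the decrement of a convergent sequence.
  have hinnov : ∀ x, Tendsto (fun k => φ (k + 1) ⬝ᵥ F k *ᵥ x) atTop (𝓝 0) := by
    intro x
    obtain ⟨c, hc⟩ := hconv x
    have hd : Tendsto (fun k => C / κ * (x ⬝ᵥ F k *ᵥ x - x ⬝ᵥ F (k + 1) *ᵥ x)) atTop (𝓝 0) := by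
      simpa using (hc.sub ((tendsto_add_atTop_iff_nat 1).2 hc)).const_mul (C / κ)
    have hsq : Tendsto (fun k => (φ (k + 1) ⬝ᵥ F k *ᵥ x) ^ 2) atTop (𝓝 0) := by
      refine squeeze_zero (fun k => sq_nonneg _) (fun k => ?_) hd
      have hNk := hN k
      have hd0 : 0 ≤ x ⬝ᵥ F k *ᵥ x - x ⬝ᵥ F (k + 1) *ᵥ x := sub_nonneg.2 (hanti x k.le_succ)
      calc (φ (k + 1) ⬝ᵥ F k *ᵥ x) ^ 2
          = (1 + η * (φ (k + 1) ⬝ᵥ F k *ᵥ φ (k + 1))) / κ *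
              (x ⬝ᵥ F k *ᵥ x - x ⬝ᵥ F (k + 1) *ᵥ x) := by
            rw [hstep k x, sub_sub_cancel, ← mul_assoc, div_mul_div_cancel₀ hκ.ne',
              div_self hNk.ne', one_mul]
        _ ≤ _ := mul_le_mul_of_nonneg_right (div_le_div_of_nonneg_right (hC k) hκ.le) hd0
    rw [tendsto_zero_iff_abs_tendsto_zero]
    simpa [Function.comp_def, Real.sqrt_sq_eq_abs] using hsq.sqrt
  have hlim : ∀ x, Tendsto (fun k => φ (k + 1) ⬝ᵥ A *ᵥ x) atTop (𝓝 0) := by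
    intro x
    have hw : Tendsto (fun k => (A - F k) *ᵥ x) atTop (𝓝 0) := by
      have hcont : Continuous fun M : Matrix (Fin n) (Fin n) ℝ => (A - M) *ᵥ x := by fun_prop
      simpa [Function.comp_def] using (hcont.tendsto A).comp hA
    have h := (hinnov x).add (tendsto_dotProduct_of_bdd (fun k => φ (k + 1)) _ _ hφ hw)
    rw [add_zero] at h
    refine h.congr fun k => ?_
    rw [sub_mulVec, dotProduct_sub]
    ring
  have hA0 : A = 0 := by
    refine ext_of_mulVec_single fun j => ?_
    set v := A *ᵥ Pi.single j 1 with hv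
    have hwin : Tendsto (fun k => ∑ i ∈ Finset.Ico (k + 1) (k + 1 + ΔT), (φ i ⬝ᵥ v) ^ 2)
        atTop (𝓝 0) := by
      have h := tendsto_finsetSum (Finset.range ΔT) fun i _ =>
        ((tendsto_add_atTop_iff_nat i).2 (hlim (Pi.single j 1))).pow 2
      simp only [ne_eq, OfNat.ofNat_ne_zero, not_false_eq_true, zero_pow,
        Finset.sum_const_zero] at h
      refine h.congr fun k => ?_
      rw [Finset.sum_Ico_eq_sum_range, Nat.add_sub_cancel_left]
      exact Finset.sum_congr rfl fun i _ => by rw [← hv, add_right_comm]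
    have hle : ε₁ * (v ⬝ᵥ v) ≤ 0 := ge_of_tendsto' hwin fun k => hlow k v
    have h0 : 0 ≤ v ⬝ᵥ v := by simpa using dotProduct_star_self_nonneg v
    rw [zero_mulVec]
    exact dotProduct_self_eq_zero.1 (by nlinarith)
  exact hA0 ▸ hA
end

section
/- Suppose λ ≥ 1, 0 < κ < 2λ, 0 < β < 2, η ≥ max{ (λ(κ + 2λ) + λ·√(5κ² − 4λκ + 4λ²))/(2λ − κ), 4λ(1 − β)²/(λ − (1 − β)²) }, and that the gain matrices satisfy F_min·I ≤ F_k ≤ F_max·I for all k ≥ 0 with 0 < F_min ≤ F_max, and that the constants c₁ = (1 − 1/λ)·F_max^{−1} and c₂ = (1 − (1 − β)²·[1/λ + κ/(λ(η − κ)) + 4λ/η²])·F_max^{−1} are nonnegative. Then the sequences (ϑ_k − θ*) and (θ_k − ϑ_k) are bounded, i.e. belong to ℓ_∞ (sup_k ‖ϑ_k − θ*‖ < ∞ and sup_k ‖θ_k − ϑ_k‖ < ∞). -/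
open Matrix

/-!
Write `x = ϑ_k - θ*`, `e = θ_k - ϑ_k`, `u = (1 - β) e`, so that `θ_{k+1} - θ* = x + u`.
The function `V_k = xᵀ F_{k-1}⁻¹ x + eᵀ F_{k-1}⁻¹ e` is nonincreasing along the recursion.
With `s = φᵀ F_{k-1} φ`, `N = 1 + η s`, `D = 1 + (η - κ) s`, `p = φᵀ x`, `q = φᵀ u`, the
Sherman–Morrison formula `F_k⁻¹ = λ⁻¹ (F_{k-1}⁻¹ + (κ / D) φ φᵀ)` (`gain_mul_inv`) gives

`V_{k+1} = λ⁻¹ (xᵀ F_{k-1}⁻¹ x + uᵀ F_{k-1}⁻¹ u) + κ (p² + q²) / (λ D)`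
`          + 2 (q² - p²) / N + 2 λ s D (p + q)² / N³`.

Bound `(p + q)² ≤ 2 (p² + q²)`. The first lower bound on `η` amounts to
`κ η / (λ (η - κ)) + 4 λ / η ≤ 2`, which makes the coefficient of `p²` nonpositive and that of
`q²` at most `4 / N`. By Cauchy–Schwarz `q² ≤ s · uᵀ F_{k-1}⁻¹ u`, and `s / N ≤ 1 / η`, so the
terms in `u` contribute at most `(1 - β)² (1 / λ + 4 / η) eᵀ F_{k-1}⁻¹ e`; the second lower bound
on `η` says that this factor is at most `1`.

Boundedness of `V` bounds `x` and `e` because `F_{k-1} ≤ F_max I` implies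
`F_max⁻¹ ‖v‖² ≤ vᵀ F_{k-1}⁻¹ v` (`sq_norm_le`).
-/

/-- The lower bound is the larger root of `(2λ - κ) η² - 2λ(κ + 2λ) η + 4κλ²`, and nonnegativity
of this quadratic is the stated inequality after division by `λ η (η - κ)`. -/
lemma eta_first {l κ η : ℝ} (hl : 0 < l) (hκ0 : 0 < κ) (hκ : κ < 2 * l)
    (h : (l * (κ + 2 * l) + l * Real.sqrt (5 * κ ^ 2 - 4 * l * κ + 4 * l ^ 2)) /
            (2 * l - κ) ≤ η) :
    κ < η ∧ κ * η / (l * (η - κ)) + 4 * l / η ≤ 2 := by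
  have hd : 0 < 2 * l - κ := by linarith
  rw [div_le_iff₀ hd] at h
  set r := Real.sqrt (5 * κ ^ 2 - 4 * l * κ + 4 * l ^ 2) with hr
  have hr0 : 0 ≤ r := Real.sqrt_nonneg _
  have hr2 : r ^ 2 = 5 * κ ^ 2 - 4 * l * κ + 4 * l ^ 2 :=
    Real.sq_sqrt (by nlinarith [sq_nonneg (2 * l - κ), sq_nonneg κ])
  have hlr : 0 ≤ l * r := by positivity
  have hκη : κ < η := by
    by_contra hc
    have h1 : η * (2 * l - κ) ≤ κ * (2 * l - κ) :=
      mul_le_mul_of_nonneg_right (not_lt.mp hc) hd.le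
    nlinarith [sq_nonneg (l - κ), mul_pos hl hl, mul_pos hl hκ0]
  refine ⟨hκη, ?_⟩
  have hη : 0 < η := hκ0.trans hκη
  have hsub : 0 < η - κ := by linarith
  have hsq : (l * r) ^ 2 ≤ (η * (2 * l - κ) - l * (κ + 2 * l)) ^ 2 :=
    pow_le_pow_left₀ hlr (by linarith) 2
  rw [mul_pow, hr2] at hsq
  have hquad : 0 ≤ (2 * l - κ) * η ^ 2 - 2 * l * (κ + 2 * l) * η + 4 * κ * l ^ 2 := by
    refine nonneg_of_mul_nonneg_right (a := 2 * l - κ) ?_ hd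
    nlinarith
  rw [div_add_div _ _ (by positivity) (by positivity), div_le_iff₀ (by positivity)]
  nlinarith

lemma eta_second {l b η : ℝ} (hl : 0 < l) (hη : 0 < η) (hb : b ^ 2 < l)
    (h : 4 * l * b ^ 2 / (l - b ^ 2) ≤ η) : b ^ 2 * (1 / l + 4 / η) ≤ 1 := by
  rw [div_le_iff₀ (by linarith)] at h
  rw [div_add_div _ _ (by positivity) (by positivity), ← mul_div_assoc,
    div_le_iff₀ (by positivity)]
  nlinarith

/-- The scalar form of `V_{k+1} ≤ V_k`: here `X = xᵀ F⁻¹ x`, `U = uᵀ F⁻¹ u`, `E = eᵀ F⁻¹ e`. -/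
lemma scalar_decrease {l κ η b s p q X U E : ℝ} (hl : 1 ≤ l) (hκ0 : 0 < κ) (hκη : κ < η)
    (hA : κ * η / (l * (η - κ)) + 4 * l / η ≤ 2) (hB : b ^ 2 * (1 / l + 4 / η) ≤ 1)
    (hs : 0 ≤ s) (hX : 0 ≤ X) (hE : 0 ≤ E) (hU : U = b ^ 2 * E) (hq : q ^ 2 ≤ s * U) :
    (1 / l * (X + κ / (1 + (η - κ) * s) * p ^ 2) - 2 * ((p + q) / (1 + η * s)) * p
        + ((p + q) / (1 + η * s)) ^ 2 * (l * s * (1 + (η - κ) * s) / (1 + η * s)))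
      + (1 / l * (U + κ / (1 + (η - κ) * s) * q ^ 2) + 2 * ((p + q) / (1 + η * s)) * q
        + ((p + q) / (1 + η * s)) ^ 2 * (l * s * (1 + (η - κ) * s) / (1 + η * s))) ≤ X + E := by
  have hl0 : 0 < l := by linarith
  have hη : 0 < η := hκ0.trans hκη
  have hsub : 0 < η - κ := by linarith
  set N := 1 + η * s with hN
  set D := 1 + (η - κ) * s with hD
  have hN0 : 0 < N := by positivity
  have hD0 : 0 < D := by positivity
  have hDN : D ≤ N := by nlinarith
  have hU0 : 0 ≤ U := by rw [hU]; positivity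
  -- uniformly in `s`: `κ N / (λ D) ≤ κ η / (λ (η - κ))` and `4 λ s D / N² ≤ 4 λ / η`
  have h1 : κ / (l * D) ≤ κ * η / (l * (η - κ)) / N := by
    rw [div_div, div_le_div_iff₀ (by positivity) (by positivity)]
    have : (η - κ) * N ≤ η * D := by rw [hN, hD]; nlinarith
    have := mul_le_mul_of_nonneg_left this (by positivity : 0 ≤ κ * l)
    nlinarith
  have h2 : 4 * l * s * D / N ^ 3 ≤ 4 * l / η / N := by
    rw [div_div, div_le_div_iff₀ (by positivity) (by positivity)]
    have h3 : (η * s) * D ≤ N * N := mul_le_mul (by linarith) hDN hD0.le hN0.le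
    have := mul_le_mul_of_nonneg_left h3 (by positivity : 0 ≤ 4 * l * N)
    nlinarith
  have h3 : κ / (l * D) + 4 * l * s * D / N ^ 3 ≤ 2 / N := by
    calc _ ≤ κ * η / (l * (η - κ)) / N + 4 * l / η / N := add_le_add h1 h2
      _ = (κ * η / (l * (η - κ)) + 4 * l / η) / N := by ring
      _ ≤ 2 / N := by gcongr
  have hw : 2 * l * s * D / N ^ 3 * (p + q) ^ 2 ≤ 4 * l * s * D / N ^ 3 * (p ^ 2 + q ^ 2) := by
    have : (p + q) ^ 2 ≤ 2 * (p ^ 2 + q ^ 2) := by nlinarith [sq_nonneg (p - q)]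
    calc _ ≤ 2 * l * s * D / N ^ 3 * (2 * (p ^ 2 + q ^ 2)) := by gcongr
      _ = _ := by ring
  have hpq := mul_le_mul_of_nonneg_right h3 (by positivity : 0 ≤ p ^ 2 + q ^ 2)
  have hq4 : 4 / N * q ^ 2 ≤ 4 / η * U := by
    have h5 : s / N ≤ 1 / η := by
      rw [div_le_div_iff₀ hN0 hη]; rw [hN]; linarith
    calc _ ≤ 4 / N * (s * U) := by gcongr
      _ = 4 * (s / N) * U := by ring
      _ ≤ 4 * (1 / η) * U := by gcongr
      _ = _ := by ring
  have hXl : 1 / l * X ≤ X := by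
    have : 1 / l ≤ 1 := by rw [div_le_one hl0]; exact hl
    nlinarith
  have hUE : 1 / l * U + 4 / η * U ≤ E := by
    have := mul_le_mul_of_nonneg_right hB hE
    rw [hU]; linarith
  have hexp : (1 / l * (X + κ / D * p ^ 2) - 2 * ((p + q) / N) * p
        + ((p + q) / N) ^ 2 * (l * s * D / N))
      + (1 / l * (U + κ / D * q ^ 2) + 2 * ((p + q) / N) * q
        + ((p + q) / N) ^ 2 * (l * s * D / N))
      = 1 / l * X + 1 / l * U + κ / (l * D) * (p ^ 2 + q ^ 2) + 2 / N * (q ^ 2 - p ^ 2)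
        + 2 * l * s * D / N ^ 3 * (p + q) ^ 2 := by
    field_simp
    ring
  rw [hexp]
  have e1 : 4 / N * q ^ 2 = 2 / N * (p ^ 2 + q ^ 2) + 2 / N * (q ^ 2 - p ^ 2) := by ring
  linarith

section Forms

variable {n : ℕ}

/-- Expansion of the quadratic form of `G⁻¹` along the direction `G φ`. -/
lemma form_update {G : Matrix (Fin n) (Fin n) ℝ} (hG : G.PosDef) (x φ : Fin n → ℝ) (t : ℝ) :
    (x + t • G *ᵥ φ) ⬝ᵥ G⁻¹ *ᵥ (x + t • G *ᵥ φ)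
      = x ⬝ᵥ G⁻¹ *ᵥ x + 2 * t * (φ ⬝ᵥ x) + t ^ 2 * (φ ⬝ᵥ G *ᵥ φ) := by
  have hu : IsUnit G.det := hG.det_pos.ne'.isUnit
  have hGt : Gᵀ = G := by simpa using hG.isHermitian.eq
  have h1 : G⁻¹ *ᵥ (G *ᵥ φ) = φ := by
    rw [mulVec_mulVec, nonsing_inv_mul _ hu, one_mulVec]
  have h2 : (G *ᵥ φ) ⬝ᵥ (G⁻¹ *ᵥ x) = φ ⬝ᵥ x := by
    rw [← hGt, mulVec_transpose, ← dotProduct_mulVec, hGt, mulVec_mulVec, mul_nonsing_inv _ hu,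
      one_mulVec]
  rw [mulVec_add, mulVec_smul, h1]
  simp only [add_dotProduct, dotProduct_add, smul_dotProduct, dotProduct_smul, smul_eq_mul, h2]
  rw [dotProduct_comm x φ, dotProduct_comm (G *ᵥ φ) φ]
  ring

lemma form_nonneg {G : Matrix (Fin n) (Fin n) ℝ} (hG : G.PosDef) (x : Fin n → ℝ) :
    0 ≤ x ⬝ᵥ G *ᵥ x := by
  simpa using hG.posSemidef.dotProduct_mulVec_nonneg x

lemma form_cauchy_schwarz {G : Matrix (Fin n) (Fin n) ℝ} (hG : G.PosDef) (x φ : Fin n → ℝ) :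
    (φ ⬝ᵥ x) ^ 2 ≤ (φ ⬝ᵥ G *ᵥ φ) * (x ⬝ᵥ G⁻¹ *ᵥ x) := by
  have h : ∀ t : ℝ, 0 ≤ (φ ⬝ᵥ G *ᵥ φ) * (t * t) + 2 * (φ ⬝ᵥ x) * t + x ⬝ᵥ G⁻¹ *ᵥ x := by
    intro t
    have := form_nonneg hG.inv (x + t • G *ᵥ φ)
    rw [form_update hG] at this
    linarith
  have := discrim_le_zero h
  unfold discrim at this
  linarith

lemma sq_norm_le {G : Matrix (Fin n) (Fin n) ℝ} (hG : G.PosDef) {c : ℝ} (hc : 0 ≤ c)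
    (hGc : (c • (1 : Matrix (Fin n) (Fin n) ℝ) - G).PosSemidef) (x : Fin n → ℝ) :
    x ⬝ᵥ x ≤ c * (x ⬝ᵥ G⁻¹ *ᵥ x) := by
  have h1 := form_cauchy_schwarz hG x x
  have h2 : x ⬝ᵥ G *ᵥ x ≤ c * (x ⬝ᵥ x) := by
    have := hGc.dotProduct_mulVec_nonneg x
    simp [sub_mulVec, smul_mulVec, dotProduct_sub] at this
    linarith
  have h3 := form_nonneg hG.inv x
  have h4 : 0 ≤ x ⬝ᵥ x := by simpa using dotProduct_star_self_nonneg x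
  rcases h4.eq_or_lt with h0 | h0
  · rw [← h0]; positivity
  · have := mul_le_mul_of_nonneg_right h2 h3
    refine le_of_mul_le_mul_left ?_ h0
    nlinarith

/-- Sherman–Morrison for the gain update, together with the value of `φᵀ F_k φ`. -/
lemma gain_mul_inv {A G : Matrix (Fin n) (Fin n) ℝ} (hA : A.PosDef) {φ : Fin n → ℝ}
    {l κ η : ℝ} (hl : 0 < l) (hκη : κ < η) (hη : 0 < η)
    (hG : G = l • (A - (κ / (1 + η * (φ ⬝ᵥ A *ᵥ φ))) • (A * vecMulVec φ φ * A))) :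
    (∀ x, x ⬝ᵥ G⁻¹ *ᵥ x = 1 / l * (x ⬝ᵥ A⁻¹ *ᵥ x
        + κ / (1 + (η - κ) * (φ ⬝ᵥ A *ᵥ φ)) * (φ ⬝ᵥ x) ^ 2)) ∧
      φ ⬝ᵥ G *ᵥ φ = l * (φ ⬝ᵥ A *ᵥ φ) * (1 + (η - κ) * (φ ⬝ᵥ A *ᵥ φ))
        / (1 + η * (φ ⬝ᵥ A *ᵥ φ)) := by
  have hs := form_nonneg hA φ
  have hu : IsUnit A.det := hA.det_pos.ne'.isUnit
  set s := φ ⬝ᵥ A *ᵥ φ with hsdef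
  have hsub : 0 < η - κ := by linarith
  have hN0 : 0 < 1 + η * s := by positivity
  have hD0 : 0 < 1 + (η - κ) * s := by positivity
  have hVV : vecMulVec φ φ * A * vecMulVec φ φ = s • vecMulVec φ φ := by
    rw [Matrix.mul_assoc, mul_vecMulVec, vecMulVec_mul_vecMulVec, ← hsdef]
    ext i j; simp [vecMulVec_apply]; ring
  have hinv : G⁻¹ = (1 / l) • (A⁻¹ + (κ / (1 + (η - κ) * s)) • vecMulVec φ φ) := by
    apply inv_eq_right_inv
    have e1 : A * vecMulVec φ φ * A * A⁻¹ = A * vecMulVec φ φ := by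
      rw [Matrix.mul_assoc, mul_nonsing_inv _ hu, Matrix.mul_one]
    have e2 : A * vecMulVec φ φ * A * vecMulVec φ φ = s • (A * vecMulVec φ φ) := by
      rw [Matrix.mul_assoc A, Matrix.mul_assoc A, hVV, Matrix.mul_smul]
    rw [hG, Matrix.smul_mul, Matrix.mul_smul, smul_smul, mul_one_div_cancel hl.ne', one_smul,
      Matrix.sub_mul, Matrix.mul_add, Matrix.mul_add, mul_nonsing_inv _ hu, Matrix.smul_mul,
      Matrix.smul_mul, e1, Matrix.mul_smul, Matrix.mul_smul, e2, smul_smul, smul_smul,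
      add_sub_assoc, ← add_smul, ← sub_smul]
    have : κ / (1 + (η - κ) * s) - (κ / (1 + η * s)
        + κ / (1 + η * s) * (κ / (1 + (η - κ) * s)) * s) = 0 := by
      field_simp
      ring
    rw [this, zero_smul, add_zero]
  have hvv : ∀ x, vecMulVec φ φ *ᵥ x = (φ ⬝ᵥ x) • φ := by
    intro x
    ext i
    simp [vecMulVec_mulVec, mul_comm]
  constructor
  · intro x
    rw [hinv, smul_mulVec, add_mulVec, smul_mulVec, hvv]
    simp only [dotProduct_smul, dotProduct_add, smul_eq_mul]
    rw [dotProduct_comm x φ]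
    ring
  · have e : (A * vecMulVec φ φ * A) *ᵥ φ = s • A *ᵥ φ := by
      rw [← mulVec_mulVec, ← mulVec_mulVec, hvv, ← hsdef, mulVec_smul]
    rw [hG, smul_mulVec, sub_mulVec, smul_mulVec, e]
    simp only [dotProduct_smul, dotProduct_sub, smul_eq_mul, ← hsdef]
    field_simp
    ring

end Forms

/-- Boundedness of the estimation errors (part (i) of Theorem 2): under the
hyperparameter conditions and uniform bounds F_min·I ≤ F_k ≤ F_max·I, the sequences
(ϑ_k − θ*) and (θ_k − ϑ_k) belong to ℓ_∞. -/
theorem stmt_15 {n : ℕ} (hn : 1 ≤ n) (φ : ℕ → Fin n → ℝ)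
    (l κ β η : ℝ) (hl : 1 ≤ l) (hκ0 : 0 < κ) (hκ : κ < 2 * l)
    (hβ0 : 0 < β) (hβ : β < 2) (hηκ : κ ≤ η)
    (hη : max ((l * (κ + 2 * l) + l * Real.sqrt (5 * κ ^ 2 - 4 * l * κ + 4 * l ^ 2)) /
            (2 * l - κ))
          (4 * l * (1 - β) ^ 2 / (l - (1 - β) ^ 2)) ≤ η)
    (F : ℕ → Matrix (Fin n) (Fin n) ℝ)
    (hF0 : (F 0).PosDef)
    (hFpos : ∀ k : ℕ, (F k).PosDef)
    (hFrec : ∀ k : ℕ, 1 ≤ k →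
      F k = l • (F (k - 1) -
        (κ / (1 + η * (φ k ⬝ᵥ (F (k - 1)).mulVec (φ k)))) •
          (F (k - 1) * vecMulVec (φ k) (φ k) * F (k - 1))))
    (θs : Fin n → ℝ) (θ ϑ : ℕ → Fin n → ℝ)
    (hθ : ∀ k : ℕ, 1 ≤ k → θ (k + 1) = θ k - β • (θ k - ϑ k))
    (hϑ : ∀ k : ℕ, 1 ≤ k → ϑ (k + 1) = ϑ k -
      (1 / (1 + η * (φ k ⬝ᵥ (F (k - 1)).mulVec (φ k)))) •
        (F k).mulVec ((vecMulVec (φ k) (φ k)).mulVec (θ (k + 1) - θs)))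
    (Fmin Fmax : ℝ) (hFmin : 0 < Fmin) (hFminmax : Fmin ≤ Fmax)
    (hFlow : ∀ k : ℕ, (F k - Fmin • (1 : Matrix (Fin n) (Fin n) ℝ)).PosSemidef)
    (hFhigh : ∀ k : ℕ, (Fmax • (1 : Matrix (Fin n) (Fin n) ℝ) - F k).PosSemidef)
    (c₁ c₂ : ℝ)
    (hc₁ : c₁ = (1 - 1 / l) * Fmax⁻¹)
    (hc₂ : c₂ = (1 - (1 - β) ^ 2 * (1 / l + κ / (l * (η - κ)) + 4 * l / η ^ 2)) * Fmax⁻¹)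
    (hc₁0 : 0 ≤ c₁) (hc₂0 : 0 ≤ c₂) :
    (∃ C : ℝ, ∀ k : ℕ, Real.sqrt ((ϑ k - θs) ⬝ᵥ (ϑ k - θs)) ≤ C) ∧
      ∃ C : ℝ, ∀ k : ℕ, Real.sqrt ((θ k - ϑ k) ⬝ᵥ (θ k - ϑ k)) ≤ C := by
  have hl0 : 0 < l := by linarith
  obtain ⟨hκη, hA⟩ := eta_first hl0 hκ0 hκ ((le_max_left _ _).trans hη)
  have hη0 : 0 < η := hκ0.trans hκη
  have hB := eta_second hl0 hη0 (by nlinarith) ((le_max_right _ _).trans hη)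
  have hvv : ∀ a x : Fin n → ℝ, vecMulVec a a *ᵥ x = (a ⬝ᵥ x) • a := by
    intro a x
    ext i
    simp [vecMulVec_mulVec, mul_comm]
  -- the Lyapunov function, shifted by one so that `V k` is the value at time `k + 1`
  let V : ℕ → ℝ := fun k => (ϑ (k + 1) - θs) ⬝ᵥ (F k)⁻¹ *ᵥ (ϑ (k + 1) - θs)
    + (θ (k + 1) - ϑ (k + 1)) ⬝ᵥ (F k)⁻¹ *ᵥ (θ (k + 1) - ϑ (k + 1))
  have hstep : ∀ k, V (k + 1) ≤ V k := by
    intro k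
    have hrec := hFrec (k + 1) (by omega)
    have hth := hθ (k + 1) (by omega)
    have hvt := hϑ (k + 1) (by omega)
    rw [Nat.add_sub_cancel] at hrec hvt
    obtain ⟨hform, hg⟩ := gain_mul_inv (hFpos k) hl0 hκη hη0 hrec
    set a := φ (k + 1)
    set x := ϑ (k + 1) - θs with hx
    set e := θ (k + 1) - ϑ (k + 1) with he
    set s := a ⬝ᵥ F k *ᵥ a
    have hw : θ (k + 1 + 1) - θs = x + (1 - β) • e := by
      rw [hth, hx, he]; module
    rw [hw, hvv, mulVec_smul, smul_smul, dotProduct_add] at hvt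
    set u := (1 - β) • e with hu
    set t := (a ⬝ᵥ x + a ⬝ᵥ u) / (1 + η * s) with ht
    have hxn : ϑ (k + 1 + 1) - θs = x + (-t) • F (k + 1) *ᵥ a := by
      rw [hvt, one_div_mul_eq_div, ← ht, hx]; module
    have hen : θ (k + 1 + 1) - ϑ (k + 1 + 1) = u + t • F (k + 1) *ᵥ a := by
      rw [hvt, one_div_mul_eq_div, ← ht, hth, hu, he]; module
    have hUE : u ⬝ᵥ (F k)⁻¹ *ᵥ u = (1 - β) ^ 2 * (e ⬝ᵥ (F k)⁻¹ *ᵥ e) := by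
      rw [hu, mulVec_smul, smul_dotProduct, dotProduct_smul, smul_eq_mul, smul_eq_mul]; ring
    have key := scalar_decrease (p := a ⬝ᵥ x) hl hκ0 hκη hA hB (form_nonneg (hFpos k) a)
      (form_nonneg (hFpos k).inv x) (form_nonneg (hFpos k).inv e) hUE
      (form_cauchy_schwarz (hFpos k) u a)
    simp only [V]
    rw [hxn, hen, form_update (hFpos _), form_update (hFpos _), hform, hform, hg]
    refine le_trans (le_of_eq ?_) key
    ring
  have hV : ∀ k, V k ≤ V 0 := fun k => antitone_nat_of_succ_le hstep (Nat.zero_le k)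
  have hFmax : 0 ≤ Fmax := (hFmin.trans_le hFminmax).le
  -- a bound at all times `k + 1` extends to time `0`, which the recursion does not reach
  have hext : ∀ v : ℕ → Fin n → ℝ, (∀ k, v (k + 1) ⬝ᵥ (F k)⁻¹ *ᵥ v (k + 1) ≤ V 0) →
      ∃ C : ℝ, ∀ k : ℕ, Real.sqrt (v k ⬝ᵥ v k) ≤ C := by
    intro v hv
    refine ⟨max (Real.sqrt (v 0 ⬝ᵥ v 0)) (Real.sqrt (Fmax * V 0)), fun k => ?_⟩
    rcases k with _ | k
    · exact le_max_left _ _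
    · exact le_max_of_le_right (Real.sqrt_le_sqrt ((sq_norm_le (hFpos k) hFmax (hFhigh k) _).trans
        (mul_le_mul_of_nonneg_left (hv k) hFmax)))
  constructor
  · refine hext (fun k => ϑ k - θs) fun k => le_trans ?_ (hV k)
    exact le_add_of_nonneg_right (form_nonneg (hFpos k).inv _)
  · refine hext (fun k => θ k - ϑ k) fun k => le_trans ?_ (hV k)
    exact le_add_of_nonneg_left (form_nonneg (hFpos k).inv _)
end
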